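/- For every n ≥ 2, the positive braid monoid B_n^{+} equipped with the restriction of the Dehornoy ordering <_D is order-isomorphic to the dual braid monoid B_n^{+*} equipped with the restriction of <_D; that is, there exists a bijection f : B_n^{+} → B_n^{+*} such that for all α, β ∈ B_n^{+}, α <_D β if and only if f(α) <_D f(β). -/

import Mathlib

/-!
Both ordered sets have order type `ω ^ ω ^ (n - 2)`. Since `B_n^{+} ⊆ B_n^{+*}`, it suffices to
bound the type of the dual monoid from above and that of the positive monoid from below.

Two orders on `B_n` are compared. The braid group acts order-preservingly on a linearly ordered set
of words on which every `σ_i` moves points up, and a `σ_i`-positive braid moves the word `i`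
strictly up; so the pointwise order is invariant on both sides and never contradicts `<_D`. That
`<_D` is total follows from confluence of rewriting in the lattice of divisors of a power of the
full twist.

For the upper bound, the band generators form a noncommutative metric on `{1, …, n}`: `a_{i,k}` lies
below a product of `a_{i,j}` and `a_{j,k}` in the pointwise order. A Higman-type induction on
partitions of `{1, …, n}` shows that the products of distances linked within a partition have rank
below a power of `ω`, the tower `ω ^ ω ^ (n - 2)` being reached at the trivial partition.

For the lower bound, let `Z` be the full twist and `c = σ_1⁻¹ σ_2 σ_1⁻¹`. If `x` starts with `1` or
`2`, then `c • x` starts with `2, 1`, and braids in `σ_2, …, σ_n` that are `σ_2`-positive move such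
words above one another. So the positive braids of `B_n`, shifted by one strand, provide a
lexicographically dominant coordinate, and as `Z ^ 2 * c` is positive this can be iterated, which
gives every finite power of the order type of `B_n^{+}` inside `B_{n+1}^{+}`.
-/

/-- The defining relations of the braid group on `n` strands, inside the free group on
generators indexed by `ℕ`.  Generator `i` corresponds to the Artin generator `σ_i`
(for `1 ≤ i ≤ n-1`); generators with index `0` or `≥ n` are killed. -/
def braidRels (n : ℕ) : Set (FreeGroup ℕ) :=
  {r | (∃ i j : ℕ, 1 ≤ i ∧ i + 2 ≤ j ∧ j ≤ n - 1 ∧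
          r = FreeGroup.of i * FreeGroup.of j * (FreeGroup.of i)⁻¹ * (FreeGroup.of j)⁻¹) ∨
       (∃ i : ℕ, 1 ≤ i ∧ i + 1 ≤ n - 1 ∧
          r = FreeGroup.of i * FreeGroup.of (i+1) * FreeGroup.of i *
              (FreeGroup.of (i+1) * FreeGroup.of i * FreeGroup.of (i+1))⁻¹) ∨
       (∃ i : ℕ, (i = 0 ∨ n ≤ i) ∧ r = FreeGroup.of i)}

/-- The braid group `B_n` on `n` strands. -/
abbrev Braid (n : ℕ) := PresentedGroup (braidRels n)

/-- The Artin generator `σ_i` of `B_n`. -/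
def genσ (n i : ℕ) : Braid n := PresentedGroup.of i

/-- The band generator `a_{i,j} = (σ_{j-1} ⋯ σ_{i+1}) σ_i (σ_{i+1}⁻¹ ⋯ σ_{j-1}⁻¹)`. -/
def band (n i j : ℕ) : Braid n :=
  (((List.range' (i+1) (j-1-i)).reverse.map (genσ n)).prod) * genσ n i *
    (((List.range' (i+1) (j-1-i)).reverse.map (genσ n)).prod)⁻¹

/-- The dual braid monoid `B_n^{+*}`: the submonoid of `B_n` generated by the band
generators `a_{i,j}`, `1 ≤ i < j ≤ n`. -/
def dualMonoid (n : ℕ) : Submonoid (Braid n) :=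
  Submonoid.closure {x | ∃ i j : ℕ, 1 ≤ i ∧ i < j ∧ j ≤ n ∧ x = band n i j}

/-- The submonoid `B_I^{+*}` generated by the band generators `a_{i,j}` with `i, j ∈ I`. -/
def dualMonoidOn (n : ℕ) (I : Set ℕ) : Submonoid (Braid n) :=
  Submonoid.closure {x | ∃ i j : ℕ, i ∈ I ∧ j ∈ I ∧ 1 ≤ i ∧ i < j ∧ j ≤ n ∧ x = band n i j}

/-- Evaluation of a word in the letters `σ_i^{±1}` (a letter is a pair of an index and a
sign, `true` meaning positive). -/
def evalWord (n : ℕ) (w : List (ℕ × Bool)) : Braid n :=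
  (w.map (fun p => if p.2 then genσ n p.1 else (genσ n p.1)⁻¹)).prod

/-- `γ` is `σ_i`-positive: it is represented by a word in the letters `σ_1^{±1}, …,
σ_{n-1}^{±1}` containing at least one `σ_i`, no `σ_i⁻¹`, and no `σ_j^{±1}` with `j < i`. -/
def SigmaPositive (n i : ℕ) (γ : Braid n) : Prop :=
  ∃ w : List (ℕ × Bool),
    (∀ p ∈ w, 1 ≤ p.1 ∧ p.1 ≤ n - 1) ∧
    (i, true) ∈ w ∧ (i, false) ∉ w ∧
    (∀ p ∈ w, i ≤ p.1) ∧
    evalWord n w = γ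

/-- The Dehornoy ordering on `B_n`: `α <_D β` iff `α⁻¹β` is `σ_i`-positive for some `i`. -/
def dehornoyLt (n : ℕ) (α β : Braid n) : Prop :=
  ∃ i : ℕ, 1 ≤ i ∧ i ≤ n - 1 ∧ SigmaPositive n i (α⁻¹ * β)

/-- The positive braid monoid `B_n^{+}`: the submonoid of `B_n` generated by
`σ_1, …, σ_{n-1}`. -/
def posMonoid (n : ℕ) : Submonoid (Braid n) :=
  Submonoid.closure {x | ∃ i : ℕ, 1 ≤ i ∧ i ≤ n - 1 ∧ x = genσ n i}

/-! ### Cancellation in Artin monoids -/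

universe u

/-- The defining relations of the simply laced Artin monoid with Coxeter graph `G`: adjacent
generators braid, distinct non-adjacent ones commute. -/
inductive ArtinMonoid.Rel {α : Type u} (G : SimpleGraph α) : FreeMonoid α → FreeMonoid α → Prop
  | comm {i j : α} : Gᶜ.Adj i j → Rel G (.of i * .of j) (.of j * .of i)
  | braid {i j : α} : G.Adj i j → Rel G (.of i * .of j * .of i) (.of j * .of i * .of j)

/-- The simply laced Artin monoid with Coxeter graph `G`. The positive braid monoid is the case of
a path; here Garside's cancellation argument is run for all triangle-free graphs. -/
abbrev ArtinMonoid {α : Type u} (G : SimpleGraph α) := PresentedMonoid (ArtinMonoid.Rel G)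

namespace ArtinMonoid

variable {α : Type u} {G : SimpleGraph α}

/-- The generator of the Artin monoid attached to a vertex. -/
abbrev gen (i : α) : ArtinMonoid G := PresentedMonoid.of (Rel G) i

theorem gen_comm {i j : α} (h : Gᶜ.Adj i j) : (gen i * gen j : ArtinMonoid G) = gen j * gen i :=
  PresentedMonoid.mk_eq_mk_of_rel (.comm h)

theorem gen_braid {i j : α} (h : G.Adj i j) :
    (gen i * gen j * gen i : ArtinMonoid G) = gen j * gen i * gen j :=
  PresentedMonoid.mk_eq_mk_of_rel (.braid h)

theorem gen_mul_comm {i j : α} (h : Gᶜ.Adj i j) (z : ArtinMonoid G) :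
    gen i * (gen j * z) = gen j * (gen i * z) := by
  rw [← mul_assoc, gen_comm h, mul_assoc]

theorem gen_mul_braid {i j : α} (h : G.Adj i j) (z : ArtinMonoid G) :
    gen i * (gen j * (gen i * z)) = gen j * (gen i * (gen j * z)) := by
  simp only [← mul_assoc, gen_braid h]

theorem induction_on {p : ArtinMonoid G → Prop} (x : ArtinMonoid G) (one : p 1)
    (gen_mul : ∀ i y, p y → p (gen i * y)) : p x :=
  Submonoid.induction_of_closure_eq_top_left (PresentedMonoid.closure_range_of (Rel G)) x one
    (by rintro _ ⟨i, rfl⟩ y; exact gen_mul i y)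

/-- Monoid homomorphisms out of an Artin monoid. -/
def lift {M : Type*} [Monoid M] (f : α → M) (comm : ∀ i j, Gᶜ.Adj i j → f i * f j = f j * f i)
    (braid : ∀ i j, G.Adj i j → f i * f j * f i = f j * f i * f j) : ArtinMonoid G →* M :=
  PresentedMonoid.lift f fun _ _ h ↦ by
    cases h with
    | comm h => simpa using comm _ _ h
    | braid h => simpa using braid _ _ h

@[simp]
theorem lift_gen {M : Type*} [Monoid M] (f : α → M) (comm braid) (i : α) :
    lift (G := G) f comm braid (gen i) = f i :=
  PresentedMonoid.lift_of _ _

/-- The common length of all words representing an element, which the relations preserve. -/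
def length (x : ArtinMonoid G) : ℕ :=
  (lift (fun _ ↦ Multiplicative.ofAdd 1) (fun _ _ _ ↦ rfl) (fun _ _ _ ↦ rfl) x).toAdd

@[simp] theorem length_one : length (1 : ArtinMonoid G) = 0 := by simp [length]

@[simp] theorem length_mul (x y : ArtinMonoid G) : length (x * y) = length x + length y := by
  simp [length]

@[simp] theorem length_gen (i : α) : length (gen i : ArtinMonoid G) = 1 := by simp [length]

theorem finite_setOf_length_le [Finite α] (k : ℕ) : {x : ArtinMonoid G | length x ≤ k}.Finite := by
  refine ((List.finite_length_le α k).image (PresentedMonoid.mk (Rel G))).subset fun x hx ↦ ?_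
  suffices h : ∀ x : ArtinMonoid G, ∃ l : List α, l.length = length x ∧
      PresentedMonoid.mk (Rel G) (FreeMonoid.ofList l) = x by
    obtain ⟨l, hl, rfl⟩ := h x
    exact ⟨l, hl.trans_le hx, rfl⟩
  intro x
  induction x using induction_on with
  | one => exact ⟨[], by simp, rfl⟩
  | gen_mul i x ih =>
    obtain ⟨l, hl, rfl⟩ := ih
    exact ⟨i :: l, by simp [hl, add_comm], rfl⟩

/-- The conclusion of Garside's key lemma for an equality `gen i * x = gen j * y`: it is a
consequence of a single relation whose two sides start with `i` and `j`. -/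
def HeadExchange (i : α) (x : ArtinMonoid G) (j : α) (y : ArtinMonoid G) : Prop :=
  (i = j ∧ x = y) ∨
  (Gᶜ.Adj i j ∧ ∃ z, x = gen j * z ∧ y = gen i * z) ∨
  (G.Adj i j ∧ ∃ z, x = gen j * (gen i * z) ∧ y = gen i * (gen j * z))

/-- Garside's key lemma for tails of length less than `N`, the induction hypothesis of its proof. -/
def HeadExchangeBelow (G : SimpleGraph α) (N : ℕ) : Prop :=
  ∀ ⦃i j : α⦄ ⦃x y : ArtinMonoid G⦄, length x < N → gen i * x = gen j * y → HeadExchange i x j y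

theorem of_mul_inj {i j : α} {a b : FreeMonoid α} (h : .of i * a = .of j * b) : i = j ∧ a = b :=
  List.cons.inj h

theorem mk_of_mul (i : α) (a : FreeMonoid α) :
    PresentedMonoid.mk (Rel G) (.of i * a) = gen i * PresentedMonoid.mk (Rel G) a :=
  map_mul _ _ _

theorem mk_eq_of_conGen {u v : FreeMonoid α} (h : ConGen.Rel (Rel G) u v) :
    PresentedMonoid.mk (Rel G) u = PresentedMonoid.mk (Rel G) v :=
  PresentedMonoid.mk_eq_mk_iff.2 h

theorem exists_eq_of_mul_of_conGen {k : α} {a v : FreeMonoid α}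
    (h : ConGen.Rel (Rel G) (.of k * a) v) : ∃ l b, v = .of l * b := by
  have hl := congrArg length (mk_eq_of_conGen h)
  cases v with
  | one => simp only [mk_of_mul, map_one, length_mul, length_gen, length_one] at hl; omega
  | of_mul l b => exact ⟨l, b, rfl⟩

namespace HeadExchange

variable {i j k : α} {x y z : ArtinMonoid G} {N : ℕ}

theorem symm (h : HeadExchange i x j y) : HeadExchange j y i x := by
  obtain ⟨h, h'⟩ | ⟨h, z, h₁, h₂⟩ | ⟨h, z, h₁, h₂⟩ := h
  · exact .inl ⟨h.symm, h'.symm⟩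
  · exact .inr (.inl ⟨h.symm, z, h₂, h₁⟩)
  · exact .inr (.inr ⟨h.symm, z, h₂, h₁⟩)

theorem mul_right (h : HeadExchange i x j y) (z : ArtinMonoid G) :
    HeadExchange i (x * z) j (y * z) := by
  obtain ⟨h, rfl⟩ | ⟨h, w, rfl, rfl⟩ | ⟨h, w, rfl, rfl⟩ := h
  · exact .inl ⟨h, rfl⟩
  · exact .inr (.inl ⟨h, w * z, by simp only [mul_assoc], by simp only [mul_assoc]⟩)
  · exact .inr (.inr ⟨h, w * z, by simp only [mul_assoc], by simp only [mul_assoc]⟩)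

theorem eq_of_same (h : HeadExchange i x i y) : x = y := by
  obtain ⟨-, h⟩ | ⟨h, -⟩ | ⟨h, -⟩ := h
  · exact h
  · exact absurd rfl h.ne
  · exact absurd rfl h.ne

theorem exists_of_comm (hij : Gᶜ.Adj i j) (h : HeadExchange i x j y) :
    ∃ z, x = gen j * z ∧ y = gen i * z := by
  obtain ⟨rfl, -⟩ | ⟨-, h⟩ | ⟨h, -⟩ := h
  · exact absurd rfl hij.ne
  · exact h
  · exact absurd h ((SimpleGraph.compl_adj ..).1 hij).2

theorem exists_of_adj (hij : G.Adj i j) (h : HeadExchange i x j y) :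
    ∃ z, x = gen j * (gen i * z) ∧ y = gen i * (gen j * z) := by
  obtain ⟨rfl, -⟩ | ⟨h, -⟩ | ⟨-, h⟩ := h
  · exact absurd rfl hij.ne
  · exact absurd hij ((SimpleGraph.compl_adj ..).1 h).2
  · exact h

theorem trans_comm_comm (IH : HeadExchangeBelow G N) (hik : Gᶜ.Adj i k) (hkj : Gᶜ.Adj k j)
    (hx : length x < N) (h : gen i * x = gen j * y) :
    HeadExchange i (gen k * x) j (gen k * y) := by
  obtain ⟨rfl, rfl⟩ | ⟨hij, z, rfl, rfl⟩ | ⟨hij, z, rfl, rfl⟩ := IH hx h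
  · exact .inl ⟨rfl, rfl⟩
  · exact .inr (.inl ⟨hij, gen k * z, gen_mul_comm hkj z, gen_mul_comm hik.symm z⟩)
  · refine .inr (.inr ⟨hij, gen k * z, ?_, ?_⟩)
    · rw [gen_mul_comm hkj, gen_mul_comm hik]
    · rw [gen_mul_comm hik.symm, gen_mul_comm hkj]

theorem trans_comm_adj (IH : HeadExchangeBelow G N) (hik : Gᶜ.Adj i k) (hkj : G.Adj k j)
    (hx : length x < N) (h : gen i * x = gen j * (gen k * y)) :
    HeadExchange i (gen k * x) j (gen k * (gen j * y)) := by
  have hlen := congrArg length h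
  simp only [length_mul, length_gen] at hlen
  obtain ⟨rfl, -⟩ | ⟨hij, w, rfl, hw⟩ | ⟨hij, w, rfl, hw⟩ := IH hx h
  · exact absurd hkj.symm ((SimpleGraph.compl_adj ..).1 hik).2
  · obtain ⟨v, rfl, rfl⟩ := (IH (by omega) hw).exists_of_comm hik.symm
    refine .inr (.inl ⟨hij, gen k * (gen j * v), gen_mul_braid hkj v, ?_⟩)
    rw [gen_mul_comm hij.symm, gen_mul_comm hik.symm]
  · obtain ⟨v, rfl, hv⟩ := (IH (by omega) hw).exists_of_comm hik.symm
    simp only [length_mul, length_gen] at hx hlen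
    obtain ⟨t, rfl, rfl⟩ := (IH (by omega) hv).exists_of_adj hkj.symm
    refine .inr (.inr ⟨hij, gen k * (gen j * (gen i * t)), ?_, ?_⟩)
    · rw [gen_mul_comm hik, gen_mul_braid hkj, gen_mul_braid hij.symm, gen_mul_comm hik.symm]
    · rw [gen_mul_braid hij.symm, gen_mul_comm hik.symm, gen_mul_comm hik t, gen_mul_braid hkj]

theorem trans_adj_adj (hG : G.CliqueFree 3) (IH : HeadExchangeBelow G N) (hik : G.Adj i k)
    (hkj : G.Adj k j) (hx : length (gen k * x) < N)
    (h : gen i * (gen k * x) = gen j * (gen k * y)) :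
    HeadExchange i (gen k * (gen i * x)) j (gen k * (gen j * y)) := by
  have hlen := congrArg length h
  simp only [length_mul, length_gen] at hx hlen
  obtain ⟨rfl, hxy⟩ | ⟨hij, w, hxw, hyw⟩ | ⟨hij, -⟩ := IH (by simpa using hx) h
  · exact .inl ⟨rfl, by rw [(IH (by omega) hxy).eq_of_same]⟩
  · obtain ⟨v, rfl, rfl⟩ := (IH (by omega) hxw).exists_of_adj hkj
    obtain ⟨v', rfl, hv⟩ := (IH (by omega) hyw).exists_of_adj hik.symm
    simp only [length_mul, length_gen] at hx hlen
    have hvv' := (IH (by simp only [length_mul, length_gen]; omega) hv).eq_of_same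
    obtain ⟨t, rfl, rfl⟩ := (IH (by omega) hvv').exists_of_comm hij.symm
    refine .inr (.inl ⟨hij, gen k * (gen j * (gen i * (gen k * t))), ?_, ?_⟩)
    · rw [gen_mul_comm hij, gen_mul_braid hik, gen_mul_braid hkj]
    · rw [gen_mul_comm hij.symm, gen_mul_braid hkj.symm, gen_mul_braid hik.symm, gen_mul_comm hij]
  · classical exact absurd (SimpleGraph.is3Clique_triple_iff.2 ⟨hik, hij, hkj⟩) (hG _)

theorem trans (hG : G.CliqueFree 3) (IH : HeadExchangeBelow G N) (hx : length x ≤ N)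
    (hy : length y = length x) (hz : length z = length x) (h₁ : HeadExchange i x k y)
    (h₂ : HeadExchange k y j z) : HeadExchange i x j z := by
  obtain ⟨rfl, rfl⟩ | ⟨hik, u, rfl, hu⟩ | ⟨hik, u, rfl, hu⟩ := h₁
  · exact h₂
  all_goals
    obtain ⟨rfl, rfl⟩ | ⟨hkj, v, rfl, rfl⟩ | ⟨hkj, v, rfl, rfl⟩ := h₂
    all_goals simp only [length_mul, length_gen] at hx hy hz
  · exact .inr (.inl ⟨hik, u, rfl, hu⟩)
  · exact trans_comm_comm IH hik hkj (by omega) hu.symm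
  · exact trans_comm_adj IH hik hkj (by omega) hu.symm
  · exact .inr (.inr ⟨hik, u, rfl, hu⟩)
  · exact (trans_comm_adj IH hkj.symm hik.symm (by omega) hu).symm
  · exact trans_adj_adj hG IH hik hkj (by simp only [length_mul, length_gen]; omega) hu.symm

theorem of_rel {u v a b : FreeMonoid α} (h : Rel G u v) (hu : u = .of i * a) (hv : v = .of j * b) :
    HeadExchange i (PresentedMonoid.mk (Rel G) a) j (PresentedMonoid.mk (Rel G) b) := by
  cases h with
  | comm h =>
    obtain ⟨rfl, rfl⟩ := of_mul_inj hu
    obtain ⟨rfl, rfl⟩ := of_mul_inj hv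
    exact .inr (.inl ⟨h, 1, by rw [mul_one]; rfl, by rw [mul_one]; rfl⟩)
  | braid h =>
    obtain ⟨rfl, rfl⟩ := of_mul_inj ((mul_assoc _ _ _).symm.trans hu)
    obtain ⟨rfl, rfl⟩ := of_mul_inj ((mul_assoc _ _ _).symm.trans hv)
    exact .inr (.inr ⟨h, 1, by rw [mul_one]; rfl, by rw [mul_one]; rfl⟩)

theorem of_conGen (hG : G.CliqueFree 3) (IH : HeadExchangeBelow G N) {u v : FreeMonoid α}
    (h : ConGen.Rel (Rel G) u v) : ∀ {i j : α} {a b : FreeMonoid α}, u = .of i * a → v = .of j * b →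
      length (PresentedMonoid.mk (Rel G) a) ≤ N →
      HeadExchange i (PresentedMonoid.mk (Rel G) a) j (PresentedMonoid.mk (Rel G) b) := by
  induction h with
  | of u v h => exact fun hu hv _ ↦ of_rel h hu hv
  | refl u =>
    intro i j a b hu hv _
    obtain ⟨rfl, rfl⟩ := of_mul_inj (hu.symm.trans hv)
    exact .inl ⟨rfl, rfl⟩
  | symm h ih =>
    rintro i j a b rfl rfl hN
    have hl := congrArg length (mk_eq_of_conGen h)
    simp only [mk_of_mul, length_mul, length_gen] at hl
    exact (ih rfl rfl (by omega)).symm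
  | @trans u v w h₁ h₂ ih₁ ih₂ =>
    rintro i j a c rfl rfl hN
    have hl₁ := congrArg length (mk_eq_of_conGen h₁)
    have hl₂ := congrArg length (mk_eq_of_conGen h₂)
    obtain ⟨k, b, rfl⟩ := exists_eq_of_mul_of_conGen h₁
    simp only [mk_of_mul, length_mul, length_gen] at hl₁ hl₂
    exact trans hG IH hN (by omega) (by omega) (ih₁ rfl rfl hN) (ih₂ rfl rfl (by omega))
  | @mul u u' v v' h₁ h₂ ih₁ ih₂ =>
    intro i j a b hu hv hN
    cases u with
    | one =>
      cases u' with
      | one => exact ih₂ ((one_mul v).symm.trans hu) ((one_mul v').symm.trans hv) hN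
      | of_mul k u' => exact nomatch exists_eq_of_mul_of_conGen h₁.symm
    | of_mul k u =>
      obtain ⟨l, u', rfl⟩ := exists_eq_of_mul_of_conGen h₁
      obtain ⟨rfl, rfl⟩ := of_mul_inj ((mul_assoc _ _ _).symm.trans hu)
      obtain ⟨rfl, rfl⟩ := of_mul_inj ((mul_assoc _ _ _).symm.trans hv)
      rw [map_mul, length_mul] at hN
      rw [map_mul, map_mul, ← mk_eq_of_conGen h₂]
      exact (ih₁ rfl rfl (by omega)).mul_right _

end HeadExchange

theorem headExchange_of_gen_mul_eq (hG : G.CliqueFree 3) {i j : α} {x y : ArtinMonoid G}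
    (h : gen i * x = gen j * y) : HeadExchange i x j y := by
  induction hN : length x using Nat.strong_induction_on generalizing i j x y with
  | _ N ih =>
    obtain ⟨a, rfl⟩ := PresentedMonoid.surjective_mk x
    obtain ⟨b, rfl⟩ := PresentedMonoid.surjective_mk y
    refine HeadExchange.of_conGen hG (N := N) (fun i j x y hx h ↦ ih _ hx h rfl) (u := .of i * a)
      (v := .of j * b) (PresentedMonoid.mk_eq_mk_iff.1 ?_) rfl rfl hN.le
    rwa [mk_of_mul, mk_of_mul]

theorem isLeftCancelMul (hG : G.CliqueFree 3) : IsLeftCancelMul (ArtinMonoid G) where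
  mul_left_cancel x y z h := by
    induction x using induction_on with
    | one => simpa using h
    | gen_mul i x ih =>
      have h : gen i * (x * y) = gen i * (x * z) := by simpa only [mul_assoc] using h
      exact ih (headExchange_of_gen_mul_eq hG h).eq_of_same

/-- The anti-automorphism fixing the generators, which reverses words. -/
def reverse (x : ArtinMonoid G) : ArtinMonoid G :=
  (lift (M := (ArtinMonoid G)ᵐᵒᵖ) (fun i ↦ .op (gen i))
    (fun i j h ↦ by simp only [← MulOpposite.op_mul, gen_comm h])
    (fun i j h ↦ by simp only [← MulOpposite.op_mul, ← mul_assoc, gen_braid h]) x).unop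

@[simp] theorem reverse_one : reverse (1 : ArtinMonoid G) = 1 := by simp [reverse]

@[simp] theorem reverse_mul (x y : ArtinMonoid G) : reverse (x * y) = reverse y * reverse x := by
  simp [reverse]

@[simp] theorem reverse_gen (i : α) : reverse (gen i : ArtinMonoid G) = gen i := by simp [reverse]

@[simp] theorem reverse_reverse (x : ArtinMonoid G) : reverse (reverse x) = x := by
  induction x using induction_on <;> simp_all

theorem eq_or_exists_of_mul_gen_eq (hG : G.CliqueFree 3) {i j : α} {x y : ArtinMonoid G}
    (h : x * gen i = y * gen j) : (i = j ∧ x = y) ∨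
      (Gᶜ.Adj i j ∧ ∃ z, x = z * gen j ∧ y = z * gen i) ∨
      (G.Adj i j ∧ ∃ z, x = z * gen i * gen j ∧ y = z * gen j * gen i) := by
  replace h := congrArg reverse h
  simp only [reverse_mul, reverse_gen] at h
  rw [← reverse_reverse x, ← reverse_reverse y]
  obtain ⟨h, h'⟩ | ⟨h, z, hx, hy⟩ | ⟨h, z, hx, hy⟩ := headExchange_of_gen_mul_eq hG h
  · exact .inl ⟨h, by rw [h']⟩
  · exact .inr (.inl ⟨h, reverse z, by simp [hx], by simp [hy]⟩)
  · exact .inr (.inr ⟨h, reverse z, by simp [hx], by simp [hy]⟩)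

end ArtinMonoid

/-! ### The full twist -/

/-- `f 1, …, f (n - 1)` satisfy the braid relations in a monoid. -/
structure BraidRelations {M : Type*} [Monoid M] (n : ℕ) (f : ℕ → M) : Prop where
  comm : ∀ {i j : ℕ}, 1 ≤ i → i + 2 ≤ j → j < n → f i * f j = f j * f i
  braid : ∀ {i : ℕ}, 1 ≤ i → i + 1 < n → f i * f (i + 1) * f i = f (i + 1) * f i * f (i + 1)

/-- The product `f 1 * ⋯ * f k`. -/
def ascProd {M : Type*} [Monoid M] (f : ℕ → M) : ℕ → M
  | 0 => 1
  | k + 1 => ascProd f k * f (k + 1)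

theorem ascProd_succ' {M : Type*} [Monoid M] (f : ℕ → M) (k : ℕ) :
    ascProd f (k + 1) = f 1 * ascProd (fun i ↦ f (i + 1)) k := by
  induction k with
  | zero => simp [ascProd]
  | succ k ih => rw [ascProd, ih, mul_assoc, ascProd]

/-- The full twist `(f 1 * ⋯ * f (n - 1)) ^ n`, the central element `Δ²` of the braid group. -/
def fullTwist {M : Type*} [Monoid M] (n : ℕ) (f : ℕ → M) : M := ascProd f (n - 1) ^ n

theorem map_fullTwist {M N : Type*} [Monoid M] [Monoid N] (φ : M →* N) (n : ℕ) (f : ℕ → M) :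
    φ (fullTwist n f) = fullTwist n (fun i ↦ φ (f i)) := by
  have h : ∀ k, φ (ascProd f k) = ascProd (fun i ↦ φ (f i)) k := by
    intro k
    induction k with
    | zero => exact map_one φ
    | succ k ih => rw [ascProd, map_mul, ih, ascProd]
  rw [fullTwist, map_pow, h, fullTwist]

namespace BraidRelations

variable {M : Type*} [Monoid M] {n : ℕ} {f : ℕ → M}

theorem mul_ascProd_comm (hf : BraidRelations n f) {j k : ℕ} (hkj : k + 2 ≤ j) (hj : j < n) :
    f j * ascProd f k = ascProd f k * f j := by
  induction k with
  | zero => simp [ascProd]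
  | succ k ih =>
    rw [ascProd, ← mul_assoc, ih (by omega), mul_assoc, mul_assoc, hf.comm (by omega) hkj hj]

theorem ascProd_mul (hf : BraidRelations n f) {i k : ℕ} (hi : 1 ≤ i) (hik : i < k) (hk : k < n) :
    ascProd f k * f i = f (i + 1) * ascProd f k := by
  induction k with
  | zero => omega
  | succ k ih =>
    obtain hik | rfl := Nat.lt_succ_iff_lt_or_eq.1 hik
    · rw [ascProd, mul_assoc, ← hf.comm hi (by omega) hk, ← mul_assoc, ih hik (by omega), mul_assoc]
    · obtain ⟨i, rfl⟩ := Nat.exists_eq_add_of_le' hi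
      have h := hf.braid hi hk
      simp only [mul_assoc] at h
      rw [ascProd, ascProd, mul_assoc, mul_assoc, h, ← mul_assoc, ← hf.mul_ascProd_comm le_rfl hk]
      simp only [mul_assoc]

theorem ascProd_pow_mul (hf : BraidRelations n f) {i k : ℕ} (hi : 1 ≤ i) (hik : i + k < n) :
    ascProd f (n - 1) ^ k * f i = f (i + k) * ascProd f (n - 1) ^ k := by
  induction k with
  | zero => simp
  | succ k ih =>
    rw [pow_succ', mul_assoc, ih (by omega), ← mul_assoc,
      hf.ascProd_mul (by omega) (by omega) (by omega), mul_assoc, add_assoc]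

theorem ascProd_mul_ascProd (hf : BraidRelations n f) {k : ℕ} (hk : k + 1 < n) :
    ascProd f (n - 1) * ascProd f k = ascProd (fun i ↦ f (i + 1)) k * ascProd f (n - 1) := by
  induction k with
  | zero => simp [ascProd]
  | succ k ih =>
    rw [ascProd, ← mul_assoc, ih (by omega), mul_assoc,
      hf.ascProd_mul (by omega) (by omega) (by omega), ascProd, mul_assoc]

theorem ascProd_sq_mul (hf : BraidRelations n f) (hn : 2 ≤ n) :
    ascProd f (n - 1) ^ 2 * f (n - 1) = f 1 * ascProd f (n - 1) ^ 2 := by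
  obtain ⟨m, rfl⟩ := Nat.exists_eq_add_of_le' hn
  have h := hf.ascProd_mul_ascProd (k := m) (by omega)
  change ascProd f (m + 1) * ascProd f m = _ * ascProd f (m + 1) at h
  change ascProd f (m + 1) ^ 2 * f (m + 1) = f 1 * ascProd f (m + 1) ^ 2
  calc ascProd f (m + 1) ^ 2 * f (m + 1)
      = f 1 * (ascProd (fun i ↦ f (i + 1)) m * ascProd f (m + 1)) * f (m + 1) := by
        rw [sq]; nth_rewrite 1 [ascProd_succ']; simp only [mul_assoc]
    _ = f 1 * (ascProd f (m + 1) * (ascProd f m * f (m + 1))) := by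
        rw [← h]; simp only [mul_assoc]
    _ = f 1 * ascProd f (m + 1) ^ 2 := by rw [sq]; rfl

theorem commute_fullTwist (hf : BraidRelations n f) {i : ℕ} (hi : 1 ≤ i) (hin : i < n) :
    Commute (fullTwist n f) (f i) := by
  set R := ascProd f (n - 1) with hR
  have split : fullTwist n f = R ^ (i - 1) * (R ^ 2 * R ^ (n - 1 - i)) := by
    rw [← pow_add, ← pow_add, fullTwist, ← hR]; congr 1; omega
  have h₁ := hf.ascProd_pow_mul (k := n - 1 - i) hi (by omega)
  have h₂ := hf.ascProd_pow_mul (i := 1) (k := i - 1) le_rfl (by omega)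
  rw [← hR, Nat.add_sub_cancel' (by omega)] at h₁ h₂
  calc fullTwist n f * f i
      = R ^ (i - 1) * (R ^ 2 * (R ^ (n - 1 - i) * f i)) := by rw [split]; simp only [mul_assoc]
    _ = R ^ (i - 1) * ((R ^ 2 * f (n - 1)) * R ^ (n - 1 - i)) := by rw [h₁, mul_assoc]
    _ = (R ^ (i - 1) * f 1) * (R ^ 2 * R ^ (n - 1 - i)) := by
        rw [hf.ascProd_sq_mul (by omega)]; simp only [hR, mul_assoc]
    _ = f i * fullTwist n f := by rw [h₂, mul_assoc, ← split]

theorem dvd_fullTwist (hf : BraidRelations n f) {i : ℕ} (hi : 1 ≤ i) (hin : i < n) :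
    f i ∣ fullTwist n f := by
  have h := hf.ascProd_pow_mul (i := 1) (k := i - 1) le_rfl (by omega)
  rw [Nat.add_sub_cancel' hi] at h
  obtain ⟨m, rfl⟩ := Nat.exists_eq_add_of_le' (show 2 ≤ n by omega)
  change ascProd f (m + 1) ^ _ * f 1 = f i * ascProd f (m + 1) ^ _ at h
  refine ⟨ascProd f (m + 1) ^ (i - 1) *
    (ascProd (fun i ↦ f (i + 1)) m * ascProd f (m + 1) ^ (m + 2 - i)), ?_⟩
  calc fullTwist (m + 2) f
      = ascProd f (m + 1) ^ (i - 1) * (ascProd f (m + 1) * ascProd f (m + 1) ^ (m + 2 - i)) := by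
        rw [← pow_succ', ← pow_add, fullTwist]; congr 1; omega
    _ = _ := by nth_rewrite 2 [ascProd_succ']; rw [← mul_assoc (f i), ← h]; simp only [mul_assoc]

end BraidRelations

/-! ### The positive braid monoid as an Artin monoid -/

/-- The Coxeter graph of the braid group on `n` strands: the path on `1, …, n - 1`. -/
def braidGraph (n : ℕ) : SimpleGraph (Set.Ico 1 n) := (SimpleGraph.hasse ℕ).induce _

/-- The abstract positive braid monoid, presented by the braid relations. -/
abbrev ArtinBraidMonoid (n : ℕ) := ArtinMonoid (braidGraph n)

theorem braidGraph_adj {n : ℕ} {i j : Set.Ico 1 n} :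
    (braidGraph n).Adj i j ↔ (i + 1 : ℕ) = j ∨ (j + 1 : ℕ) = i := by
  simp [braidGraph, SimpleGraph.hasse_adj, Order.covBy_iff_add_one_eq]

theorem braidGraph_compl_adj {n : ℕ} {i j : Set.Ico 1 n} :
    (braidGraph n)ᶜ.Adj i j ↔ (i + 2 : ℕ) ≤ j ∨ (j + 2 : ℕ) ≤ i := by
  rw [SimpleGraph.compl_adj, braidGraph_adj, ne_eq, Subtype.ext_iff]
  omega

theorem braidGraph_cliqueFree (n : ℕ) : (braidGraph n).CliqueFree 3 := by
  classical
  intro s hs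
  obtain ⟨i, j, k, hij, hik, hjk, -⟩ := SimpleGraph.is3Clique_iff.1 hs
  rw [braidGraph_adj] at hij hik hjk
  omega

instance (n : ℕ) : IsLeftCancelMul (ArtinBraidMonoid n) :=
  ArtinMonoid.isLeftCancelMul (braidGraph_cliqueFree n)

namespace ArtinBraidMonoid

open ArtinMonoid

variable {n : ℕ}

/-- The generator with index `i`, with the junk value `1` unless `1 ≤ i < n`, in accordance with
`genσ`. -/
def σ (n i : ℕ) : ArtinBraidMonoid n := if h : i ∈ Set.Ico 1 n then gen ⟨i, h⟩ else 1

theorem σ_val (i : Set.Ico 1 n) : σ n i = gen i := dif_pos i.2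

theorem braidRelations_σ (n : ℕ) : BraidRelations n (σ n) where
  comm {i j} hi hij hj := by
    rw [σ, σ, dif_pos ⟨hi, by omega⟩, dif_pos ⟨by omega, hj⟩]
    exact gen_comm (braidGraph_compl_adj.2 (.inl hij))
  braid {i} hi hin := by
    rw [σ, σ, dif_pos ⟨hi, by omega⟩, dif_pos ⟨by omega, hin⟩]
    exact gen_braid (braidGraph_adj.2 (.inl rfl))

theorem commute_fullTwist (x : ArtinBraidMonoid n) : Commute (fullTwist n (σ n)) x := by
  induction x using ArtinMonoid.induction_on with
  | one => exact .one_right _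
  | gen_mul i x ih =>
    rw [← σ_val]
    exact ((braidRelations_σ n).commute_fullTwist i.2.1 i.2.2).mul_right ih

theorem dvd_fullTwist_pow (x : ArtinBraidMonoid n) {k : ℕ} (hk : x.length ≤ k) :
    x ∣ fullTwist n (σ n) ^ k := by
  induction x using ArtinMonoid.induction_on generalizing k with
  | one => exact one_dvd _
  | gen_mul i x ih =>
    rw [length_mul, length_gen] at hk
    obtain ⟨k, rfl⟩ := Nat.exists_eq_add_of_le' (show 1 ≤ k by omega)
    obtain ⟨y, hy⟩ := ih (k := k) (by omega)
    obtain ⟨z, hz⟩ := (braidRelations_σ n).dvd_fullTwist i.2.1 i.2.2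
    refine ⟨y * z, ?_⟩
    calc fullTwist n (σ n) ^ (k + 1)
        = fullTwist n (σ n) ^ k * gen i * z := by
          rw [pow_succ]; nth_rw 2 [hz]; rw [σ_val, mul_assoc]
      _ = gen i * x * (y * z) := by
        rw [((commute_fullTwist (gen i)).pow_left k).eq, hy]; simp only [mul_assoc]

end ArtinBraidMonoid

/-! ### An order-preserving action on reduced words -/

/-- Words in `ℕ` without two equal consecutive letters: the set on which the braid groups act. -/
@[ext]
structure ReducedWord where
  letters : List ℕ
  isChain : letters.IsChain (· ≠ ·)

namespace ReducedWord

/-- The first letter of a word, as an integer so that the empty word can be given `-1`. -/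
def firstLetter : List ℕ → ℤ
  | [] => -1
  | a :: _ => a

/-- The first letter of a reduced word, `-1` if there is none. -/
def head (x : ReducedWord) : ℤ := firstLetter x.letters

/-- The second letter of a reduced word, `-1` if there is none. -/
def next (x : ReducedWord) : ℤ := firstLetter x.letters.tail

/-- The empty word. -/
def nil : ReducedWord := ⟨[], List.IsChain.nil⟩

theorem isChain_cons_of_firstLetter_ne {a : ℕ} {l : List ℕ} (hl : l.IsChain (· ≠ ·))
    (h : firstLetter l ≠ a) : (a :: l).IsChain (· ≠ ·) := by
  cases l with
  | nil => exact List.IsChain.singleton a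
  | cons b l => exact List.IsChain.cons_cons (fun e ↦ h (by simp [firstLetter, e])) hl

/-- Multiplication by the involution `a` on the left: the letter `a` is cancelled if it comes first
and prepended otherwise. -/
def push (a : ℕ) (x : ReducedWord) : ReducedWord :=
  if h : x.head = a then ⟨x.letters.tail, x.isChain.tail⟩
  else ⟨a :: x.letters, isChain_cons_of_firstLetter_ne x.isChain h⟩

theorem head_nil : nil.head = -1 := rfl

theorem next_nil : nil.next = -1 := rfl

theorem neg_one_le_head (x : ReducedWord) : -1 ≤ x.head := by
  obtain ⟨_ | ⟨a, l⟩, hl⟩ := x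
  · exact le_rfl
  · simp only [head, firstLetter]; omega

theorem eq_nil_of_head {x : ReducedWord} (h : x.head = -1) : x = nil := by
  obtain ⟨_ | ⟨a, l⟩, hl⟩ := x
  · rfl
  · simp only [head, firstLetter] at h; omega

theorem letters_push_of_ne {a : ℕ} {x : ReducedWord} (h : x.head ≠ a) :
    (push a x).letters = a :: x.letters := by
  rw [push, dif_neg h]

theorem head_push_of_ne {a : ℕ} {x : ReducedWord} (h : x.head ≠ a) : (push a x).head = a := by
  rw [head, letters_push_of_ne h, firstLetter]

theorem next_push_of_ne {a : ℕ} {x : ReducedWord} (h : x.head ≠ a) : (push a x).next = x.head := by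
  rw [next, letters_push_of_ne h, List.tail_cons, head]

theorem head_push_of_eq {a : ℕ} {x : ReducedWord} (h : x.head = a) : (push a x).head = x.next := by
  rw [push, dif_pos h, head, next]

@[elab_as_elim]
theorem induction_on {P : ReducedWord → Prop} (x : ReducedWord) (nil : P nil)
    (push : ∀ (a : ℕ) (x : ReducedWord), x.head ≠ a → P x → P (push a x)) : P x := by
  obtain ⟨l, hl⟩ := x
  induction l with
  | nil => exact nil
  | cons a l ih =>
    have ha : head ⟨l, hl.tail⟩ ≠ a := by
      cases l with
      | nil => simp only [head, firstLetter]; omega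
      | cons b l => simpa [head, firstLetter, eq_comm] using (List.isChain_cons_cons.1 hl).1
    convert push a ⟨l, hl.tail⟩ ha (ih hl.tail)
    rw [letters_push_of_ne ha]

theorem next_ne {x : ReducedWord} {a : ℕ} (h : x.head = a) : x.next ≠ a := by
  induction x using induction_on with
  | nil => rw [head_nil] at h; omega
  | push b x hb _ =>
    rw [next_push_of_ne hb]
    rw [head_push_of_ne hb] at h
    rwa [h] at hb

theorem push_push_of_head_ne {a : ℕ} {x : ReducedWord} (h : x.head ≠ a) :
    push a (push a x) = x := by
  have : (push a (push a x)).letters = (push a x).letters.tail := by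
    rw [push, dif_pos (head_push_of_ne h)]
  exact ReducedWord.ext (by rw [this, letters_push_of_ne h, List.tail_cons])

@[simp]
theorem push_push (a : ℕ) (x : ReducedWord) : push a (push a x) = x := by
  by_cases h : x.head = a
  · induction x using induction_on with
    | nil => rw [head_nil] at h; omega
    | push b x hb _ =>
      obtain rfl : b = a := by exact_mod_cast head_push_of_ne hb ▸ h
      rw [push_push_of_head_ne hb]
  · exact push_push_of_head_ne h

/-- The letter that `σ_i` (`p = true`) or `σ_i⁻¹` (`p = false`) puts in front of a letter `i` read
at an even position; at odd positions the two roles are exchanged. -/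
def outer (i : ℕ) (p : Bool) : ℕ := if p then i - 1 else i + 1

/-- Left multiplication by the image of the letter `a`, which is the word
`outer i p, i, outer i (!p)` for `a = i` and `a` itself otherwise. -/
def pushImage (i : ℕ) (p : Bool) (a : ℕ) (x : ReducedWord) : ReducedWord :=
  if a = i then push (outer i p) (push i (push (outer i (!p)) x)) else push a x

/-- The substitution defining the action, letter by letter. -/
def actList (i : ℕ) : Bool → List ℕ → ReducedWord
  | _, [] => nil
  | p, a :: l => pushImage i p a (actList i (!p) l)

/-- The action of `σ_i` (`p = true`) and of `σ_i⁻¹` (`p = false`) on reduced words. -/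
def act (i : ℕ) (p : Bool) (x : ReducedWord) : ReducedWord := actList i p x.letters

@[simp]
theorem act_nil (i : ℕ) (p : Bool) : act i p nil = nil := rfl

theorem pushImage_pushImage (i : ℕ) (p : Bool) (a : ℕ) (x : ReducedWord) :
    pushImage i p a (pushImage i (!p) a x) = x := by
  unfold pushImage
  split_ifs <;> simp

theorem act_push (i : ℕ) (p : Bool) (a : ℕ) (x : ReducedWord) :
    act i p (push a x) = pushImage i p a (act i (!p) x) := by
  by_cases h : x.head = a
  · obtain ⟨y, rfl⟩ : ∃ y, x = push a y := ⟨push a x, (push_push a x).symm⟩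
    have hy : y.head ≠ a := by
      intro hy
      exact next_ne hy (by rwa [← head_push_of_eq hy])
    have hpush : act i (!p) (push a y) = pushImage i (!p) a (act i p y) := by
      simp only [act, letters_push_of_ne hy, actList, Bool.not_not]
    rw [push_push, hpush, pushImage_pushImage]
  · simp only [act, letters_push_of_ne h, actList]

theorem act_push_of_ne {i a : ℕ} (h : a ≠ i) (p : Bool) (x : ReducedWord) :
    act i p (push a x) = push a (act i (!p) x) := by
  rw [act_push, pushImage, if_neg h]

theorem act_push_self (i : ℕ) (p : Bool) (x : ReducedWord) :
    act i p (push i x) = push (outer i p) (push i (push (outer i (!p)) (act i (!p) x))) := by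
  rw [act_push, pushImage, if_pos rfl]

theorem outer_ne {i : ℕ} (hi : 1 ≤ i) (p : Bool) : outer i p ≠ i := by
  unfold outer; split_ifs <;> omega

theorem act_act_not {i : ℕ} (hi : 1 ≤ i) (p : Bool) (x : ReducedWord) :
    act i (!p) (act i p x) = x := by
  induction x using induction_on generalizing p with
  | nil => rfl
  | push a x _ ih =>
    have ih := ih (!p)
    by_cases ha : a = i
    · subst ha
      simp only [act_push_self, act_push_of_ne (outer_ne hi _), Bool.not_not, push_push] at ih ⊢
      rw [ih]
    · rw [act_push_of_ne ha, act_push_of_ne ha, ih]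

theorem act_comm {i j : ℕ} (hi : 1 ≤ i) (hij : i + 2 ≤ j) (p : Bool) (x : ReducedWord) :
    act i p (act j p x) = act j p (act i p x) := by
  have outer_i_ne (q) : outer i q ≠ j := by unfold outer; split_ifs <;> omega
  have outer_j_ne (q) : outer j q ≠ i := by unfold outer; split_ifs <;> omega
  have hne : i ≠ j := by omega
  induction x using induction_on generalizing p with
  | nil => rfl
  | push a x _ ih =>
    by_cases hai : a = i
    · subst hai
      simp only [act_push_self, act_push_of_ne hne, act_push_of_ne (outer_i_ne _), Bool.not_not, ih]
    by_cases haj : a = j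
    · subst haj
      simp only [act_push_self, act_push_of_ne hne.symm, act_push_of_ne (outer_j_ne _),
        Bool.not_not, ih]
    simp only [act_push_of_ne hai, act_push_of_ne haj, ih]

theorem act_braid {i : ℕ} (hi : 1 ≤ i) (p : Bool) (x : ReducedWord) :
    act i p (act (i + 1) p (act i p x)) = act (i + 1) p (act i p (act (i + 1) p x)) := by
  have h₁ : i - 1 ≠ i := by omega
  have h₂ : i - 1 ≠ i + 1 := by omega
  have h₃ : i + 1 + 1 ≠ i := by omega
  induction x using induction_on generalizing p with
  | nil => rfl
  | push a x _ ih =>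
    have ih := ih (!p)
    by_cases ha : a = i
    · subst ha
      cases p <;> simp_all [act_push, pushImage, outer]
    by_cases ha' : a = i + 1
    · subst ha'
      cases p <;> simp_all [act_push, pushImage, outer]
    simp only [act_push_of_ne ha, act_push_of_ne ha', ih]

theorem act_eq_self {i : ℕ} {x : ReducedWord} (h : i ∉ x.letters) (p : Bool) : act i p x = x := by
  induction x using induction_on generalizing p with
  | nil => rfl
  | push a x ha ih =>
    rw [letters_push_of_ne ha, List.mem_cons, not_or] at h
    rw [act_push_of_ne (Ne.symm h.1), ih h.2]

theorem not_mem_push {i a : ℕ} (h : i ≠ a) {x : ReducedWord} (hx : i ∉ x.letters) :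
    i ∉ (push a x).letters := by
  unfold push
  split_ifs
  · exact fun hi ↦ hx (List.mem_of_mem_tail hi)
  · exact List.not_mem_cons_of_ne_of_not_mem h hx

/-! ### The order on reduced words -/

/-- The continued fraction that orders the reduced words: the letter `a` acts on the line as
`v ↦ -4a + 1 / (v + 4a)`, and the empty word has value `4`. -/
def value (x : ReducedWord) : ℚ :=
  x.letters.foldr (fun (a : ℕ) (v : ℚ) ↦ -4 * a + 1 / (v + 4 * a)) 4

theorem value_nil : nil.value = 4 := rfl

theorem value_push (a : ℕ) (x : ReducedWord) :
    (push a x).value = -4 * a + 1 / (x.value + 4 * a) := by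
  have key {y : ReducedWord} (hy : y.head ≠ a) :
      (push a y).value = -4 * a + 1 / (y.value + 4 * a) := by
    rw [value, letters_push_of_ne hy, List.foldr_cons, value]
  by_cases h : x.head = a
  · have := key (y := push a x) (by rw [head_push_of_eq h]; exact next_ne h)
    rw [push_push] at this
    rw [this]
    simp
  · exact key h

theorem abs_value_add_head_le (x : ReducedWord) : |x.value + 4 * x.head| ≤ 1 / 3 := by
  induction x using induction_on with
  | nil => rw [value_nil, head_nil]; norm_num
  | push a x ha ih =>
    rw [value_push, head_push_of_ne ha]
    rw [abs_le] at ih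
    have hsep : 3 ≤ |x.value + 4 * a| := by
      rw [le_abs]
      rcases lt_or_gt_of_ne ha with h | h
      · left; have : (x.head : ℚ) + 1 ≤ a := by exact_mod_cast h
        linarith
      · right; have : (a : ℚ) + 1 ≤ x.head := by exact_mod_cast h
        linarith
    calc |-4 * (a : ℚ) + 1 / (x.value + 4 * a) + 4 * ((a : ℤ) : ℚ)| = 1 / |x.value + 4 * a| := by
          rw [← abs_one_div]; push_cast; ring_nf
      _ ≤ 1 / 3 := one_div_le_one_div_of_le (by norm_num) hsep

theorem value_lt_of_head_lt {x y : ReducedWord} (h : x.head < y.head) : y.value < x.value := by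
  have hx := abs_le.1 x.abs_value_add_head_le
  have hy := abs_le.1 y.abs_value_add_head_le
  have : (x.head : ℚ) + 1 ≤ y.head := by exact_mod_cast h
  linarith

theorem value_add_ne_zero (a : ℕ) (x : ReducedWord) : x.value + 4 * a ≠ 0 := by
  induction x using induction_on generalizing a with
  | nil => rw [value_nil]; positivity
  | push b x hb ih =>
    by_cases h : b = a
    · subst h
      rw [value_push]
      simpa using ih b
    · intro h0
      have hb' := (push b x).abs_value_add_head_le
      have hab : (1 : ℚ) ≤ |(b : ℚ) - a| := by
        exact_mod_cast Int.one_le_abs (sub_ne_zero.2 (Nat.cast_injective.ne h : (b : ℤ) ≠ a))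
      rw [head_push_of_ne hb, eq_neg_of_add_eq_zero_left h0] at hb'
      have : |-(4 * (a : ℚ)) + 4 * ((b : ℤ) : ℚ)| = 4 * |(b : ℚ) - a| := by
        rw [← abs_of_pos (show (0 : ℚ) < 4 by norm_num), ← abs_mul]
        push_cast
        ring_nf
      linarith

theorem value_injective : Function.Injective value := by
  intro x
  induction x using induction_on with
  | nil =>
    intro y h
    by_contra hy
    have hy' : nil.head < y.head :=
      lt_of_le_of_ne y.neg_one_le_head fun e ↦ hy (eq_nil_of_head e.symm).symm
    exact (value_lt_of_head_lt hy').ne' h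
  | push a x _ ih =>
    intro y h
    rw [ih (show x.value = (push a y).value by rw [value_push, ← h, ← value_push, push_push]),
      push_push]

instance : LinearOrder ReducedWord := LinearOrder.lift' value value_injective

instance : CircularOrder ReducedWord := LinearOrder.toCircularOrder ReducedWord

theorem lt_iff {x y : ReducedWord} : x < y ↔ x.value < y.value := Iff.rfl

theorem lt_of_head_lt {x y : ReducedWord} (h : y.head < x.head) : x < y := value_lt_of_head_lt h

theorem sbtw_iff {x y z : ReducedWord} :
    sbtw x y z ↔ x < y ∧ y < z ∨ y < z ∧ z < x ∨ z < x ∧ x < y := Iff.rfl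

theorem btw_iff {x y z : ReducedWord} :
    btw x y z ↔ x ≤ y ∧ y ≤ z ∨ y ≤ z ∧ z ≤ x ∨ z ≤ x ∧ x ≤ y := Iff.rfl

theorem le_nil (x : ReducedWord) : x ≤ nil := by
  rcases eq_or_lt_of_le x.neg_one_le_head with h | h
  · exact (eq_nil_of_head h.symm).le
  · exact (lt_of_head_lt (show nil.head < x.head from h)).le

theorem sbtw_iff_value {x y z : ReducedWord} :
    sbtw x y z ↔ 0 < (y.value - x.value) * (z.value - y.value) * (z.value - x.value) := by
  have key {x y z : ReducedWord} (h : sbtw x y z) :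
      0 < (y.value - x.value) * (z.value - y.value) * (z.value - x.value) := by
    simp only [sbtw_iff, lt_iff] at h
    rcases h with ⟨h₁, h₂⟩ | ⟨h₁, h₂⟩ | ⟨h₁, h₂⟩
    · exact mul_pos (mul_pos (by linarith) (by linarith)) (by linarith)
    · exact mul_pos_of_neg_of_neg (mul_neg_of_neg_of_pos (by linarith) (by linarith)) (by linarith)
    · exact mul_pos_of_neg_of_neg (mul_neg_of_pos_of_neg (by linarith) (by linarith)) (by linarith)
  refine ⟨key, fun h ↦ ?_⟩
  have hxy : x ≠ y := by rintro rfl; simp at h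
  have hyz : y ≠ z := by rintro rfl; simp at h
  have hzx : z ≠ x := by rintro rfl; simp at h
  by_contra hs
  have hs' : sbtw z y x := by
    rw [sbtw_iff] at hs ⊢
    grind
  linarith [key hs']

theorem sbtw_push {a : ℕ} {x y z : ReducedWord} :
    sbtw (push a x) (push a y) (push a z) ↔ sbtw z y x := by
  have hx := value_add_ne_zero a x
  have hy := value_add_ne_zero a y
  have hz := value_add_ne_zero a z
  rw [sbtw_iff_value, sbtw_iff_value, value_push, value_push, value_push]
  have : (-4 * (a : ℚ) + 1 / (y.value + 4 * a) - (-4 * a + 1 / (x.value + 4 * a))) *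
      (-4 * a + 1 / (z.value + 4 * a) - (-4 * a + 1 / (y.value + 4 * a))) *
      (-4 * a + 1 / (z.value + 4 * a) - (-4 * a + 1 / (x.value + 4 * a))) =
      (y.value - z.value) * (x.value - y.value) * (x.value - z.value) *
      (1 / ((x.value + 4 * a) * (y.value + 4 * a) * (z.value + 4 * a))) ^ 2 := by
    field_simp
    ring
  rw [this, mul_pos_iff_of_pos_right (by positivity)]

theorem btw_push {a : ℕ} {x y z : ReducedWord} :
    btw (push a x) (push a y) (push a z) ↔ btw z y x := by
  rw [btw_iff_not_sbtw, sbtw_push, ← btw_iff_not_sbtw]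

theorem sbtw_pushImage (i : ℕ) (p : Bool) (a : ℕ) {x y z : ReducedWord} :
    sbtw (pushImage i p a x) (pushImage i p a y) (pushImage i p a z) ↔ sbtw z y x := by
  unfold pushImage
  split_ifs <;> simp only [sbtw_push]

theorem head_push (a : ℕ) (x : ReducedWord) :
    (x.head ≠ a → (push a x).head = a ∧ (push a x).next = x.head) ∧
      (x.head = a → (push a x).head = x.next ∧ x.next ≠ a) :=
  ⟨fun h ↦ ⟨head_push_of_ne h, next_push_of_ne h⟩, fun h ↦ ⟨head_push_of_eq h, next_ne h⟩⟩

theorem head_act {i : ℕ} (hi : 1 ≤ i) (p : Bool) (x : ReducedWord) :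
    (x.head = i → (act i p x).head = outer i p ∧ (act i p x).next = i) ∧
    (x.head = outer i p → (act i p x).head = outer i p ∧ (act i p x).next ≠ i) ∧
    (x.head = outer i (!p) → (act i p x).head = outer i (!p) ∨ (act i p x).head = i) ∧
    (x.head ≠ i → x.head ≠ outer i p → x.head ≠ outer i (!p) → (act i p x).head = x.head) := by
  have hp := outer_ne hi p
  have hq := outer_ne hi (!p)
  have hpq : outer i p ≠ outer i (!p) := by unfold outer; cases p <;> grind
  induction x using induction_on generalizing p with
  | nil =>
    rw [act_nil, head_nil, next_nil]
    omega
  | push a x ha ih =>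
    have ih := ih (!p) hq (by simpa using hp) (by simpa using hpq.symm)
    rw [Bool.not_not] at ih
    rw [head_push_of_ne ha]
    by_cases hai : a = i
    · subst hai
      rw [act_push_self]
      have h₁ := head_push (outer a (!p)) (act a (!p) x)
      have h₂ := head_push a (push (outer a (!p)) (act a (!p) x))
      have h₃ := head_push (outer a p) (push a (push (outer a (!p)) (act a (!p) x)))
      grind
    · rw [act_push_of_ne hai]
      have h₁ := head_push a (act i (!p) x)
      grind

/-- `1` or `-1` if the second letter of a word is the successor or the predecessor of the first,
and `0` otherwise. -/
def slope (x : ReducedWord) : ℤ :=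
  if x.next - x.head = 1 then 1 else if x.next - x.head = -1 then -1 else 0

/-- The constants come from `1 / (4 - 1 / 3) = 3 / 11`; the radius `3 / 22` keeps the three
intervals for `1 / A` disjoint. -/
theorem abs_inv_add_lt {A : ℚ} {d : ℤ} (hd : d ≠ 0) (hA : |A + 4 * d| ≤ 1 / 3) :
    |1 / A + 3 / 11 * (if d = 1 then 1 else if d = -1 then -1 else 0 : ℤ)| < 3 / 22 := by
  rw [abs_le] at hA
  have hpos {B : ℚ} (h₁ : 11 / 3 ≤ B) (h₂ : B ≤ 13 / 3) : |1 / B - 3 / 11| < 3 / 22 := by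
    have h₃ : 3 / 13 ≤ 1 / B := by rw [le_div_iff₀] <;> linarith
    have h₄ : 1 / B ≤ 3 / 11 := by rw [div_le_iff₀] <;> linarith
    rw [abs_lt]
    constructor <;> linarith
  split_ifs with h₁ h₂
  · subst h₁
    have := hpos (B := -A) (by push_cast at hA; linarith) (by push_cast at hA; linarith)
    rw [← abs_neg] at this
    convert this using 2
    push_cast
    ring
  · subst h₂
    have := hpos (B := A) (by push_cast at hA; linarith) (by push_cast at hA; linarith)
    convert this using 2
    push_cast
    ring
  · have : 23 / 3 ≤ |A| := by
      rw [le_abs]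
      rcases lt_or_gt_of_ne hd with h | h
      · left
        have : (d : ℚ) ≤ -2 := by exact_mod_cast (show d ≤ -2 by omega)
        linarith
      · right
        have : (2 : ℚ) ≤ d := by exact_mod_cast (show 2 ≤ d by omega)
        linarith
    rw [Int.cast_zero, mul_zero, add_zero, abs_one_div]
    exact (one_div_le_one_div_of_le (by norm_num) this).trans_lt (by norm_num)

theorem abs_value_add_lt (x : ReducedWord) :
    |x.value + 4 * x.head + 3 / 11 * x.slope| < 3 / 22 := by
  induction x using induction_on with
  | nil => rw [value_nil, slope, next_nil, head_nil]; norm_num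
  | push a x ha _ =>
    have hA := x.abs_value_add_head_le
    have := abs_inv_add_lt (A := x.value + 4 * a) (sub_ne_zero.2 ha)
      (by convert hA using 2; push_cast; ring)
    rw [value_push, slope, head_push_of_ne ha, next_push_of_ne ha]
    convert this using 2
    push_cast
    ring

theorem lt_of_head_eq_of_slope_lt {x y : ReducedWord} (h : x.head = y.head)
    (hs : y.slope < x.slope) : x < y := by
  have hx := abs_lt.1 x.abs_value_add_lt
  have hy := abs_lt.1 y.abs_value_add_lt
  have : (y.slope : ℚ) + 1 ≤ x.slope := by exact_mod_cast hs
  rw [lt_iff]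
  rw [h] at hx
  linarith

theorem act_lt_act_of_head_lt {i : ℕ} (hi : 1 ≤ i) (p : Bool) {x y : ReducedWord}
    (h : y.head < x.head) : act i p x < act i p y := by
  have hx := head_act hi p x
  have hy := head_act hi p y
  have hlevel : (act i p y).head < (act i p x).head ∨
      (act i p x).head = (act i p y).head ∧ (act i p y).slope < (act i p x).slope := by
    by_cases hspecial : (x.head = i ∨ x.head = outer i p) ∧ (y.head = i ∨ y.head = outer i p)
    · right
      cases p
      · simp only [outer, Bool.false_eq_true, if_false] at hx hy hspecial
        have hx := hx.2.1 (by omega)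
        have hy := hy.1 (by omega)
        refine ⟨hx.1.trans hy.1.symm, ?_⟩
        unfold slope
        split_ifs <;> omega
      · simp only [outer, if_true] at hx hy hspecial
        have hx := hx.1 (by omega)
        have hy := hy.2.1 (by omega)
        refine ⟨hx.1.trans hy.1.symm, ?_⟩
        unfold slope
        split_ifs <;> omega
    · left
      cases p <;> simp only [outer, Bool.not_true, Bool.not_false, if_true, Bool.false_eq_true,
        if_false] at hx hy hspecial <;> omega
  rcases hlevel with h | ⟨h₁, h₂⟩
  · exact lt_of_head_lt h
  · exact lt_of_head_eq_of_slope_lt h₁ h₂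

theorem length_push_of_head_eq {a : ℕ} {x : ReducedWord} (h : x.head = a) :
    (push a x).letters.length + 1 = x.letters.length := by
  have := push_push a x
  conv_rhs => rw [← this, letters_push_of_ne (by rw [head_push_of_eq h]; exact next_ne h),
    List.length_cons]

theorem length_push_le (a : ℕ) (x : ReducedWord) :
    (push a x).letters.length ≤ x.letters.length + 1 := by
  by_cases h : x.head = a
  · have := length_push_of_head_eq h
    omega
  · rw [letters_push_of_ne h, List.length_cons]

theorem exists_head_eq {x : ReducedWord} (h : x ≠ nil) : ∃ a : ℕ, x.head = a := by
  have h₁ := x.neg_one_le_head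
  have h₂ : x.head ≠ -1 := fun h' ↦ h (eq_nil_of_head h')
  exact ⟨x.head.toNat, by omega⟩

theorem sbtw_act_of_head_ne {i : ℕ} (hi : 1 ≤ i) (p : Bool) {x y z : ReducedWord}
    (hxy : x.head ≠ y.head) (hyz : y.head ≠ z.head) (hzx : z.head ≠ x.head) (h : sbtw x y z) :
    sbtw (act i p x) (act i p y) (act i p z) := by
  have key {u v : ReducedWord} (huv : u.head ≠ v.head) (h : u < v) : act i p u < act i p v := by
    rcases lt_or_gt_of_ne huv with h' | h'
    · exact absurd (lt_of_head_lt h') h.asymm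
    · exact act_lt_act_of_head_lt hi p h'
  exact Or.imp (And.imp (key hxy) (key hyz))
    (Or.imp (And.imp (key hyz) (key hzx)) (And.imp (key hzx) (key hxy))) h

theorem sbtw_act {i : ℕ} (hi : 1 ≤ i) (p : Bool) {x y z : ReducedWord} (h : sbtw x y z) :
    sbtw (act i p x) (act i p y) (act i p z) := by
  induction hN : x.letters.length + y.letters.length + z.letters.length
    using Nat.strong_induction_on
    generalizing p x y z with
  | _ N ih =>
    have of_head_eq {x y z : ReducedWord} (h : sbtw x y z)
        (hN : x.letters.length + y.letters.length + z.letters.length = N) (hxy : x.head = y.head) :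
        sbtw (act i p x) (act i p y) (act i p z) := by
      have hx : x ≠ nil := by
        rintro rfl
        rw [eq_nil_of_head hxy.symm] at h
        exact sbtw_irrefl_left h
      obtain ⟨a, ha⟩ := exists_head_eq hx
      have hx := length_push_of_head_eq ha
      have hy := length_push_of_head_eq (hxy ▸ ha)
      have hz := length_push_le a z
      have := ih _ (by omega) (!p) (sbtw_push.2 h : sbtw (push a z) (push a y) (push a x)) rfl
      rw [← sbtw_pushImage i p a, ← act_push, ← act_push, ← act_push] at this
      simpa only [push_push] using this
    by_cases hxy : x.head = y.head
    · exact of_head_eq h hN hxy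
    by_cases hyz : y.head = z.head
    · exact (of_head_eq h.cyclic_left (by omega) hyz).cyclic_right
    by_cases hzx : z.head = x.head
    · exact (of_head_eq h.cyclic_right (by omega) hzx).cyclic_left
    exact sbtw_act_of_head_ne hi p hxy hyz hzx h

theorem act_strictMono {i : ℕ} (hi : 1 ≤ i) (p : Bool) : StrictMono (act i p) := by
  intro x y h
  have hinj : Function.Injective (act i p) := Function.LeftInverse.injective (act_act_not hi p)
  rcases (le_nil y).eq_or_lt with rfl | hy
  · rw [act_nil]
    exact (le_nil _).lt_of_ne fun e ↦ h.ne (hinj (e.trans (act_nil i p).symm))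
  · have := sbtw_act hi p (Or.inl ⟨h, hy⟩ : sbtw x y nil)
    rw [act_nil, sbtw_iff] at this
    rcases this with h | h | h
    · exact h.1
    · exact absurd h.2 (le_nil _).not_gt
    · exact absurd h.1 (le_nil _).not_gt

theorem lt_act_true_of_head_eq {i : ℕ} (hi : 1 ≤ i) {x : ReducedWord} (hx : x.head = i) :
    x < act i true x := by
  have := ((head_act hi true x).1 hx).1
  simp only [outer, if_true] at this
  exact lt_of_head_lt (by omega)

theorem act_false_lt_of_head_eq {i : ℕ} (hi : 1 ≤ i) {x : ReducedWord} (hx : x.head = i) :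
    act i false x < x := by
  have := ((head_act hi false x).1 hx).1
  simp only [outer, Bool.false_eq_true, if_false] at this
  exact lt_of_head_lt (by omega)

theorem head_ne_of_not_mem {i : ℕ} {x : ReducedWord} (h : i ∉ x.letters) : x.head ≠ i := by
  induction x using induction_on with
  | nil => rw [head_nil]; omega
  | push a x ha _ =>
    rw [letters_push_of_ne ha, List.mem_cons, not_or] at h
    rw [head_push_of_ne ha]
    exact_mod_cast Ne.symm h.1

theorem btw_act {i : ℕ} (hi : 1 ≤ i) (w : ReducedWord) {z : ReducedWord} (hz : i ∉ z.letters) :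
    btw z w (act i true w) ∧ btw z (act i false w) w := by
  induction w using induction_on generalizing z with
  | nil => exact ⟨btw_rfl_right, btw_rfl_right⟩
  | push a w ha ih =>
    by_cases hai : a = i
    · subst hai
      have hw := head_push_of_ne ha
      have h₁ := lt_act_true_of_head_eq hi hw
      have h₂ := act_false_lt_of_head_eq hi hw
      rcases lt_or_gt_of_ne (hw ▸ head_ne_of_not_mem hz) with h | h
      · have h₃ := act_lt_act_of_head_lt hi true h
        rw [act_eq_self hz] at h₃
        exact ⟨btw_iff.2 (.inr (.inl ⟨h₁.le, h₃.le⟩)),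
          btw_iff.2 (.inr (.inl ⟨h₂.le, (lt_of_head_lt h).le⟩))⟩
      · have h₃ := act_lt_act_of_head_lt hi false h
        rw [act_eq_self hz] at h₃
        exact ⟨btw_iff.2 (.inl ⟨(lt_of_head_lt h).le, h₁.le⟩), btw_iff.2 (.inl ⟨h₃.le, h₂.le⟩)⟩
    · have ih := ih (not_mem_push (Ne.symm hai) hz)
      rw [act_push_of_ne hai, act_push_of_ne hai, ← push_push a z, btw_push, btw_push]
      exact ⟨ih.2.cyclic_left, ih.1.cyclic_left⟩

theorem le_act_true {i : ℕ} (hi : 1 ≤ i) (x : ReducedWord) : x ≤ act i true x := by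
  have h : btw nil x (act i true x) := (btw_act hi x List.not_mem_nil).1
  rw [btw_iff] at h
  rcases h with h | h | h
  · exact h.2
  · exact h.1
  · rw [(le_nil x).antisymm h.2, act_nil]

end ReducedWord

/-! ### The braid group action -/

theorem genσ_comm {n i j : ℕ} (hi : 1 ≤ i) (hij : i + 2 ≤ j) (hj : j < n) :
    genσ n i * genσ n j = genσ n j * genσ n i := by
  have h := PresentedGroup.one_of_mem (rels := braidRels n)
    (Or.inl ⟨i, j, hi, hij, Nat.le_sub_one_of_lt hj, rfl⟩)
  rw [map_mul, map_inv, mul_inv_eq_one, map_mul, map_mul, map_inv, mul_inv_eq_iff_eq_mul] at h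
  exact h

theorem genσ_braid {n i : ℕ} (hi : 1 ≤ i) (hin : i + 1 < n) :
    genσ n i * genσ n (i + 1) * genσ n i = genσ n (i + 1) * genσ n i * genσ n (i + 1) := by
  have h := PresentedGroup.one_of_mem (rels := braidRels n)
    (Or.inr (Or.inl ⟨i, hi, Nat.le_sub_one_of_lt hin, rfl⟩))
  rw [map_mul, map_inv, mul_inv_eq_one, map_mul, map_mul, map_mul, map_mul] at h
  exact h

theorem genσ_of_notMem {n i : ℕ} (h : i ∉ Set.Ico 1 n) : genσ n i = 1 := by
  rw [Set.mem_Ico] at h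
  exact PresentedGroup.one_of_mem (Or.inr (Or.inr ⟨i, by omega, rfl⟩))

theorem braidRelations_genσ (n : ℕ) : BraidRelations n (genσ n) := ⟨genσ_comm, genσ_braid⟩

@[elab_as_elim]
theorem Braid.induction_on {n : ℕ} {p : Braid n → Prop} (g : Braid n) (one : p 1)
    (gen : ∀ i, 1 ≤ i → i < n → p (genσ n i)) (mul : ∀ a b, p a → p b → p (a * b))
    (inv : ∀ a, p a → p a⁻¹) : p g := by
  have hg : g ∈ Subgroup.closure (Set.range (PresentedGroup.of (rels := braidRels n))) := by
    rw [PresentedGroup.closure_range_of]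
    trivial
  induction hg using Subgroup.closure_induction with
  | mem _ h =>
    obtain ⟨i, rfl⟩ := h
    by_cases hi : i ∈ Set.Ico 1 n
    · exact gen i hi.1 hi.2
    · exact (congrArg p (genσ_of_notMem hi)).mpr one
  | one => exact one
  | mul a b _ _ ha hb => exact mul a b ha hb
  | inv a _ ha => exact inv a ha

/-- The permutation of reduced words by which `σ_i` acts; the identity unless `1 ≤ i < n`. -/
def genPerm (n i : ℕ) : Equiv.Perm ReducedWord :=
  if h : 1 ≤ i ∧ i < n then
    ⟨ReducedWord.act i true, ReducedWord.act i false, ReducedWord.act_act_not h.1 true,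
      ReducedWord.act_act_not h.1 false⟩
  else 1

theorem genPerm_apply {n i : ℕ} (hi : 1 ≤ i) (hin : i < n) (x : ReducedWord) :
    genPerm n i x = ReducedWord.act i true x := by
  rw [genPerm, dif_pos ⟨hi, hin⟩]
  rfl

theorem lift_genPerm_eq_one {n : ℕ} : ∀ r ∈ braidRels n, FreeGroup.lift (genPerm n) r = 1 := by
  rintro r (⟨i, j, hi, hij, hj, rfl⟩ | ⟨i, hi, hj, rfl⟩ | ⟨i, hi, rfl⟩) <;>
    simp only [map_mul, map_inv, FreeGroup.lift_apply_of]
  · rw [mul_inv_eq_one, mul_inv_eq_iff_eq_mul]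
    ext1 x
    simp only [Equiv.Perm.mul_apply, genPerm_apply hi (show i < n by omega),
      genPerm_apply (show 1 ≤ j by omega) (show j < n by omega)]
    exact ReducedWord.act_comm hi hij true x
  · rw [mul_inv_eq_one]
    ext1 x
    simp only [Equiv.Perm.mul_apply, genPerm_apply hi (show i < n by omega),
      genPerm_apply (show 1 ≤ i + 1 by omega) (show i + 1 < n by omega)]
    exact ReducedWord.act_braid hi true x
  · rw [genPerm, dif_neg (by omega)]

instance (n : ℕ) : MulAction (Braid n) ReducedWord :=
  MulAction.compHom ReducedWord (PresentedGroup.toGroup lift_genPerm_eq_one)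

section Action

variable {n i j : ℕ}

theorem genσ_smul (hi : 1 ≤ i) (hin : i < n) (x : ReducedWord) :
    genσ n i • x = ReducedWord.act i true x := by
  rw [← genPerm_apply hi hin]
  exact congrArg (· x) (PresentedGroup.toGroup.of lift_genPerm_eq_one)

theorem genσ_inv_smul (hi : 1 ≤ i) (hin : i < n) (x : ReducedWord) :
    (genσ n i)⁻¹ • x = ReducedWord.act i false x := by
  rw [inv_smul_eq_iff, genσ_smul hi hin]
  exact (ReducedWord.act_act_not hi false x).symm

theorem smul_strictMono (g : Braid n) : StrictMono fun x : ReducedWord ↦ g • x := by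
  induction g using Braid.induction_on with
  | one => exact (funext fun x : ReducedWord ↦ one_smul (Braid n) x) ▸ strictMono_id
  | gen i hi hin => exact (funext (genσ_smul hi hin)) ▸ ReducedWord.act_strictMono hi true
  | mul a b ha hb => exact (funext fun x : ReducedWord ↦ mul_smul a b x) ▸ ha.comp hb
  | inv a ha => exact fun x y h ↦ ha.lt_iff_lt.1 (by simpa only [smul_inv_smul] using h)

theorem smul_lt_smul_iff (g : Braid n) {x y : ReducedWord} : g • x < g • y ↔ x < y :=
  (smul_strictMono g).lt_iff_lt

theorem smul_le_smul_iff (g : Braid n) {x y : ReducedWord} : g • x ≤ g • y ↔ x ≤ y :=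
  (smul_strictMono g).le_iff_le

theorem le_genσ_smul (i : ℕ) (x : ReducedWord) : x ≤ genσ n i • x := by
  by_cases h : i ∈ Set.Ico 1 n
  · rw [genσ_smul h.1 h.2]; exact ReducedWord.le_act_true h.1 x
  · rw [genσ_of_notMem h, one_smul]

/-- The one-letter word `i`, which detects `σ_i`-positivity. -/
def ReducedWord.single (i : ℕ) : ReducedWord := push i nil

theorem ReducedWord.head_single (i : ℕ) : (single i).head = i :=
  head_push_of_ne (by rw [head_nil]; omega)

theorem genσ_smul_single (h : i ≠ j) :
    genσ n i • ReducedWord.single j = ReducedWord.single j := by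
  by_cases hi : i ∈ Set.Ico 1 n
  · rw [genσ_smul hi.1 hi.2]
    exact ReducedWord.act_eq_self (ReducedWord.not_mem_push h List.not_mem_nil) true
  · rw [genσ_of_notMem hi, one_smul]

theorem single_lt_genσ_smul (hi : 1 ≤ i) (hin : i < n) :
    ReducedWord.single i < genσ n i • ReducedWord.single i := by
  rw [genσ_smul hi hin]
  exact ReducedWord.lt_act_true_of_head_eq hi (ReducedWord.head_single i)

end Action

/-! ### Sigma-positive braids -/

/-- The submonoid of `B_n` generated by `σ_i` and all `σ_j^{±1}` with `j > i`: the braids with a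
word in which neither `σ_i⁻¹` nor a letter of index below `i` occurs. -/
def sigmaNonneg (n i : ℕ) : Submonoid (Braid n) :=
  Submonoid.closure ({g | ∃ j, i ≤ j ∧ genσ n j = g} ∪ {g | ∃ j, i < j ∧ (genσ n j)⁻¹ = g})

section SigmaPositive

variable {n i j : ℕ} {g h : Braid n}

theorem genσ_mem_sigmaNonneg (h : i ≤ j) : genσ n j ∈ sigmaNonneg n i :=
  Submonoid.subset_closure (.inl ⟨j, h, rfl⟩)

theorem genσ_inv_mem_sigmaNonneg (h : i < j) : (genσ n j)⁻¹ ∈ sigmaNonneg n i :=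
  Submonoid.subset_closure (.inr ⟨j, h, rfl⟩)

theorem sigmaNonneg_mono_of_lt (hij : i < j) : sigmaNonneg n j ≤ sigmaNonneg n i := by
  rw [sigmaNonneg, Submonoid.closure_le]
  rintro _ (⟨k, hk, rfl⟩ | ⟨k, hk, rfl⟩)
  · exact genσ_mem_sigmaNonneg (by omega)
  · exact genσ_inv_mem_sigmaNonneg (by omega)

theorem evalWord_append (v w : List (ℕ × Bool)) :
    evalWord n (v ++ w) = evalWord n v * evalWord n w := by
  simp [evalWord]

theorem mem_sigmaNonneg_iff : g ∈ sigmaNonneg n i ↔ ∃ w : List (ℕ × Bool),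
    (∀ p ∈ w, 1 ≤ p.1 ∧ p.1 ≤ n - 1) ∧ (i, false) ∉ w ∧ (∀ p ∈ w, i ≤ p.1) ∧ evalWord n w = g := by
  constructor
  · intro hg
    have letter (j : ℕ) (b : Bool) (hij : i ≤ j) (hb : b = false → i ≠ j) :
        ∃ w : List (ℕ × Bool), (∀ p ∈ w, 1 ≤ p.1 ∧ p.1 ≤ n - 1) ∧ (i, false) ∉ w ∧
          (∀ p ∈ w, i ≤ p.1) ∧ evalWord n w = if b then genσ n j else (genσ n j)⁻¹ := by
      by_cases hj : j ∈ Set.Ico 1 n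
      · rw [Set.mem_Ico] at hj
        exact ⟨[(j, b)], by simpa using by omega, by grind, by simpa, by simp [evalWord]⟩
      · exact ⟨[], by simp [genσ_of_notMem hj, evalWord]⟩
    induction hg using Submonoid.closure_induction with
    | mem _ h =>
      obtain ⟨j, hj, rfl⟩ | ⟨j, hj, rfl⟩ := h
      · exact letter j true hj (by simp)
      · exact letter j false hj.le (fun _ ↦ hj.ne)
    | one => exact ⟨[], by simp [evalWord]⟩
    | mul a b _ _ ha hb =>
      obtain ⟨v, h₁, h₂, h₃, rfl⟩ := ha
      obtain ⟨w, h₁', h₂', h₃', rfl⟩ := hb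
      exact ⟨v ++ w, by grind, by grind, by grind, evalWord_append v w⟩
  · rintro ⟨w, -, hi, hw, rfl⟩
    refine Submonoid.list_prod_mem _ fun g hg ↦ ?_
    obtain ⟨⟨j, b⟩, hj, rfl⟩ := List.mem_map.1 hg
    cases b with
    | true => exact genσ_mem_sigmaNonneg (hw _ hj)
    | false =>
      exact genσ_inv_mem_sigmaNonneg ((hw _ hj).lt_of_ne fun e ↦ hi (e ▸ hj))

theorem sigmaPositive_iff : SigmaPositive n i g ↔
    1 ≤ i ∧ i < n ∧ ∃ a ∈ sigmaNonneg n i, ∃ b ∈ sigmaNonneg n i, a * genσ n i * b = g := by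
  constructor
  · rintro ⟨w, hw, hi, hi', hiw, rfl⟩
    have hi₁ := hw _ hi
    obtain ⟨u, v, rfl⟩ := List.append_of_mem hi
    have sub {t : List (ℕ × Bool)} (ht : t ⊆ u ++ (i, true) :: v) :
        evalWord n t ∈ sigmaNonneg n i :=
      mem_sigmaNonneg_iff.2
        ⟨t, fun p hp ↦ hw p (ht hp), fun h ↦ hi' (ht h), fun p hp ↦ hiw p (ht hp), rfl⟩
    refine ⟨hi₁.1, by omega, evalWord n u, sub (by simp), evalWord n v, sub (by simp), ?_⟩
    rw [List.append_cons, evalWord_append, evalWord_append]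
    simp [evalWord]
  · rintro ⟨hi, hin, a, ha, b, hb, rfl⟩
    obtain ⟨u, h₁, h₂, h₃, rfl⟩ := mem_sigmaNonneg_iff.1 ha
    obtain ⟨v, h₁', h₂', h₃', rfl⟩ := mem_sigmaNonneg_iff.1 hb
    refine ⟨u ++ [(i, true)] ++ v, by grind, by grind, by grind, by grind, ?_⟩
    rw [evalWord_append, evalWord_append]
    simp [evalWord]

theorem sigmaNonneg_smul_single (hg : g ∈ sigmaNonneg n i) (hji : j < i) :
    g • ReducedWord.single j = ReducedWord.single j := by
  induction hg using Submonoid.closure_induction with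
  | mem _ h =>
    obtain ⟨k, hk, rfl⟩ | ⟨k, hk, rfl⟩ := h
    · exact genσ_smul_single (by omega)
    · rw [inv_smul_eq_iff, genσ_smul_single (by omega)]
  | one => exact one_smul _ _
  | mul a b _ _ ha hb => rw [mul_smul, hb, ha]

theorem single_le_sigmaNonneg_smul (hg : g ∈ sigmaNonneg n i) :
    ReducedWord.single i ≤ g • ReducedWord.single i := by
  induction hg using Submonoid.closure_induction with
  | mem _ h =>
    obtain ⟨k, -, rfl⟩ | ⟨k, hk, rfl⟩ := h
    · exact le_genσ_smul k _
    · exact (inv_smul_eq_iff.2 (genσ_smul_single hk.ne').symm).ge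
  | one => exact (one_smul _ _).ge
  | mul a b _ _ ha hb => rw [mul_smul]; exact ha.trans ((smul_le_smul_iff a).2 hb)

theorem SigmaPositive.single_lt_smul (hg : SigmaPositive n i g) :
    ReducedWord.single i < g • ReducedWord.single i := by
  obtain ⟨hi, hin, a, ha, b, hb, rfl⟩ := sigmaPositive_iff.1 hg
  rw [mul_smul, mul_smul]
  refine (single_le_sigmaNonneg_smul ha).trans_lt ((smul_lt_smul_iff a).2 ?_)
  exact (single_lt_genσ_smul hi hin).trans_le
    ((smul_le_smul_iff _).2 (single_le_sigmaNonneg_smul hb))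

theorem SigmaPositive.mem_sigmaNonneg (hg : SigmaPositive n i g) : g ∈ sigmaNonneg n i := by
  obtain ⟨-, -, a, ha, b, hb, rfl⟩ := sigmaPositive_iff.1 hg
  exact mul_mem (mul_mem ha (genσ_mem_sigmaNonneg le_rfl)) hb

theorem SigmaPositive.ne_one (hg : SigmaPositive n i g) : g ≠ 1 := by
  rintro rfl
  exact hg.single_lt_smul.ne (one_smul _ _).symm

theorem SigmaPositive.mul_sigmaNonneg (hg : SigmaPositive n i g) (hh : h ∈ sigmaNonneg n i) :
    SigmaPositive n i (g * h) := by
  obtain ⟨hi, hin, a, ha, b, hb, rfl⟩ := sigmaPositive_iff.1 hg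
  exact sigmaPositive_iff.2 ⟨hi, hin, a, ha, b * h, mul_mem hb hh, by simp only [mul_assoc]⟩

theorem SigmaPositive.sigmaNonneg_mul (hg : SigmaPositive n i g) (hh : h ∈ sigmaNonneg n i) :
    SigmaPositive n i (h * g) := by
  obtain ⟨hi, hin, a, ha, b, hb, rfl⟩ := sigmaPositive_iff.1 hg
  exact sigmaPositive_iff.2 ⟨hi, hin, h * a, mul_mem hh ha, b, hb, by simp only [mul_assoc]⟩

theorem SigmaPositive.mul (hg : SigmaPositive n i g) (hh : SigmaPositive n j h) :
    SigmaPositive n (min i j) (g * h) := by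
  rcases lt_trichotomy i j with hij | rfl | hij
  · rw [min_eq_left hij.le]
    exact hg.mul_sigmaNonneg (sigmaNonneg_mono_of_lt hij hh.mem_sigmaNonneg)
  · rw [min_self]
    exact hg.mul_sigmaNonneg hh.mem_sigmaNonneg
  · rw [min_eq_right hij.le]
    exact hh.sigmaNonneg_mul (sigmaNonneg_mono_of_lt hij hg.mem_sigmaNonneg)

end SigmaPositive

/-! ### Comparing braids -/

theorem join_reflTransGen_of_locally_confluent {α : Type*} {r : α → α → Prop}
    (wf : WellFounded (flip r))
    (hr : ∀ a b c, r a b → r a c → Relation.Join (Relation.ReflTransGen r) b c) {a b c : α}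
    (hb : Relation.ReflTransGen r a b) (hc : Relation.ReflTransGen r a c) :
    Relation.Join (Relation.ReflTransGen r) b c := by
  induction a using wf.induction generalizing b c with
  | h a ih =>
    rcases hb.cases_head with rfl | ⟨b', hab', hb'⟩
    · exact ⟨c, hc, .refl⟩
    rcases hc.cases_head with rfl | ⟨c', hac', hc'⟩
    · exact ⟨b, .refl, hb⟩
    obtain ⟨d, hd, hd'⟩ := hr a b' c' hab' hac'
    obtain ⟨x, hx, hx'⟩ := ih b' hab' hb' hd
    obtain ⟨y, hy, hy'⟩ := ih c' hac' (hd'.trans hx') hc'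
    exact ⟨y, hx.trans hy, hy'⟩

theorem inv_mul_mem_of_reflTransGen {α G : Type*} [Group G] {r : α → α → Prop} {f : α → G}
    {S : Submonoid G} (hr : ∀ a b, r a b → (f a)⁻¹ * f b ∈ S) {a b : α}
    (h : Relation.ReflTransGen r a b) : (f a)⁻¹ * f b ∈ S := by
  induction h with
  | refl => rw [inv_mul_cancel]; exact one_mem S
  | @tail b c _ hbc ih => simpa [mul_assoc] using mul_mem ih (hr b c hbc)

namespace ArtinBraidMonoid

open ArtinMonoid Relation

variable {n : ℕ}

/-- The canonical map from the abstract positive braid monoid to the braid group. -/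
def toBraid (n : ℕ) : ArtinBraidMonoid n →* Braid n :=
  lift (fun i ↦ genσ n i)
    (fun i j h ↦ by
      rcases braidGraph_compl_adj.1 h with h | h
      · exact genσ_comm i.2.1 h j.2.2
      · exact (genσ_comm j.2.1 h i.2.2).symm)
    (fun i j h ↦ by
      rcases braidGraph_adj.1 h with h | h
      · exact h ▸ genσ_braid i.2.1 (h ▸ j.2.2)
      · exact h ▸ (genσ_braid j.2.1 (h ▸ i.2.2)).symm)

theorem toBraid_σ (i : ℕ) : toBraid n (σ n i) = genσ n i := by
  by_cases h : i ∈ Set.Ico 1 n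
  · rw [σ, dif_pos h]; exact lift_gen _ _ _ _
  · rw [σ, dif_neg h, map_one, genσ_of_notMem h]

theorem exists_of_σ_mul_eq_of_far {i j : ℕ} {x y : ArtinBraidMonoid n} (hi : 1 ≤ i)
    (hij : i + 2 ≤ j) (hj : j < n) (h : σ n i * x = σ n j * y) :
    ∃ z, x = σ n j * z ∧ y = σ n i * z := by
  lift i to Set.Ico 1 n using ⟨hi, by omega⟩
  lift j to Set.Ico 1 n using ⟨by omega, hj⟩
  rw [σ_val, σ_val] at *
  have hij' : (braidGraph n)ᶜ.Adj i j := braidGraph_compl_adj.2 (.inl hij)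
  rcases headExchange_of_gen_mul_eq (braidGraph_cliqueFree n) h with h | h | h
  · exact absurd h.1 hij'.ne
  · exact h.2
  · exact absurd h.1 (SimpleGraph.compl_adj _ _ _ |>.1 hij').2

theorem exists_of_σ_mul_eq_of_succ {i : ℕ} {x y : ArtinBraidMonoid n} (hi : 1 ≤ i)
    (hin : i + 1 < n) (h : σ n i * x = σ n (i + 1) * y) :
    ∃ z, x = σ n (i + 1) * (σ n i * z) ∧ y = σ n i * (σ n (i + 1) * z) := by
  generalize hj : i + 1 = j at *
  lift i to Set.Ico 1 n using ⟨hi, by omega⟩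
  lift j to Set.Ico 1 n using ⟨by omega, hin⟩
  rw [σ_val, σ_val] at *
  have hij : (braidGraph n).Adj i j := braidGraph_adj.2 (.inl hj)
  rcases headExchange_of_gen_mul_eq (braidGraph_cliqueFree n) h with h | h | h
  · exact absurd h.1 hij.ne
  · exact absurd hij (SimpleGraph.compl_adj _ _ _ |>.1 h.1).2
  · exact h.2

/-- The type of left divisors of `Ω`. -/
abbrev Divisor (Ω : ArtinBraidMonoid n) := {e : ArtinBraidMonoid n // e ∣ Ω}

namespace Divisor

variable {Ω : ArtinBraidMonoid n} {i j : ℕ} {a b c d : Divisor Ω}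

/-- The edges `a → a * σ_i` of index `i` in the graph of divisors of `Ω`. -/
def Step (i : ℕ) (a b : Divisor Ω) : Prop := i ∈ Set.Ico 1 n ∧ b.1 = a.1 * σ n i

/-- The edges of index at least `i` in the graph of divisors of `Ω`. -/
def StepFrom (i : ℕ) (a b : Divisor Ω) : Prop := ∃ j, i ≤ j ∧ Step j a b

/-- `a` and `b` are connected in the graph of divisors by edges of index at least `i`. -/
def Connected (i : ℕ) : Divisor Ω → Divisor Ω → Prop :=
  ReflTransGen fun a b ↦ StepFrom i a b ∨ StepFrom i b a

/-- There is a path from `a` to `b` with edges of index at least `i`, those of index `i` being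
traversed forwards only. -/
def WeakLE (i : ℕ) : Divisor Ω → Divisor Ω → Prop :=
  ReflTransGen fun a b ↦ Connected (i + 1) a b ∨ Step i a b

/-- There is a path as for `WeakLE i` that traverses some edge of index `i`. -/
def StrictLT (i : ℕ) (a b : Divisor Ω) : Prop := ∃ c d, WeakLE i a c ∧ Step i c d ∧ WeakLE i d b

theorem Connected.symm (h : Connected i a b) : Connected i b a :=
  @(@ReflTransGen.stdSymm _ _ ⟨fun _ _ ↦ Or.symm⟩).symm _ _ h

theorem Step.connected (h : Step j a b) (hij : i ≤ j) : Connected i a b :=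
  .single (.inl ⟨j, hij, h⟩)

theorem Step.length_lt (h : Step i a b) : a.1.length < b.1.length := by
  rw [h.2, length_mul, σ, dif_pos h.1, length_gen]
  exact Nat.lt_succ_self _

theorem Step.eq_of_step (h : Step i a b) (h' : Step i a c) : b = c :=
  Subtype.ext (h.2.trans h'.2.symm)

theorem exists_val_eq {e z : ArtinBraidMonoid n} (h : e * z = Ω) : ∃ d : Divisor Ω, d.1 = e :=
  ⟨⟨e, Dvd.intro _ h⟩, rfl⟩

theorem Step.exists_mul_eq (hb : Step i a b) (hc : Step j a c) :
    ∃ x y, b.1 * x = Ω ∧ c.1 * y = Ω ∧ σ n i * x = σ n j * y := by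
  obtain ⟨x, hx⟩ := b.2
  obtain ⟨y, hy⟩ := c.2
  refine ⟨x, y, hx.symm, hy.symm, mul_left_cancel (a := a.1) ?_⟩
  rw [← mul_assoc, ← mul_assoc, ← hb.2, ← hc.2, ← hx, ← hy]

theorem Step.exists_of_far (hb : Step i a b) (hc : Step j a c) (hij : i + 2 ≤ j) :
    ∃ d, Step j b d ∧ Step i c d := by
  obtain ⟨x, y, hx, -, h⟩ := hb.exists_mul_eq hc
  obtain ⟨z, hxz, -⟩ := exists_of_σ_mul_eq_of_far hb.1.1 hij hc.1.2 h
  obtain ⟨d, hd⟩ := exists_val_eq ((mul_assoc _ _ _).trans (hxz ▸ hx))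
  refine ⟨d, ⟨hc.1, hd⟩, hb.1, ?_⟩
  rw [hd, hb.2, hc.2, mul_assoc, mul_assoc, (braidRelations_σ n).comm hb.1.1 hij hc.1.2]

theorem Step.exists_of_succ (hb : Step i a b) (hc : Step (i + 1) a c) :
    ∃ b' c' d, Step (i + 1) b b' ∧ Step i c c' ∧ Step i b' d ∧ Step (i + 1) c' d := by
  obtain ⟨x, y, hx, hy, h⟩ := hb.exists_mul_eq hc
  obtain ⟨z, hxz, hyz⟩ := exists_of_σ_mul_eq_of_succ hb.1.1 hc.1.2 h
  obtain ⟨b', hb'⟩ := exists_val_eq ((mul_assoc _ _ _).trans (hxz ▸ hx))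
  obtain ⟨c', hc'⟩ := exists_val_eq ((mul_assoc _ _ _).trans (hyz ▸ hy))
  obtain ⟨d, hd⟩ := exists_val_eq (Ω := Ω) (e := b'.1 * σ n i) (z := z) <| by
    rw [hb', mul_assoc, mul_assoc, ← hxz, hx]
  refine ⟨b', c', d, ⟨hc.1, hb'⟩, ⟨hb.1, hc'⟩, ⟨hb.1, hd⟩, hc.1, ?_⟩
  simpa only [hd, hb', hc', hb.2, hc.2, mul_assoc] using
    congrArg (a.1 * ·) ((braidRelations_σ n).braid hb.1.1 hc.1.2)

theorem Step.exists_of_connected (hb : Step i a b) (h : Connected (i + 2) a c) :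
    ∃ d, Step i c d ∧ Connected (i + 1) b d := by
  induction h with
  | refl => exact ⟨b, hb, .refl⟩
  | @tail c c' _ h ih =>
    obtain ⟨d, hd, hbd⟩ := ih
    rcases h with ⟨j, hj, h⟩ | ⟨j, hj, h⟩
    · obtain ⟨d', hdd', hd'⟩ := hd.exists_of_far h hj
      exact ⟨d', hd', hbd.trans (hdd'.connected (by omega))⟩
    · have comm : σ n j * σ n i = σ n i * σ n j :=
        ((braidRelations_σ n).comm hb.1.1 hj h.1.2).symm
      have hd' : d.1 = c'.1 * σ n i * σ n j := by rw [hd.2, h.2, mul_assoc, mul_assoc, comm]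
      refine ⟨⟨c'.1 * σ n i, (Dvd.intro _ hd'.symm).trans d.2⟩, ⟨hd.1, rfl⟩, hbd.trans ?_⟩
      exact (Step.connected ⟨h.1, hd'⟩ (by omega)).symm

theorem Step.exists_of_weakLE (hb : Step i a b) (h : WeakLE (i + 1) a c) :
    ∃ d, Step i c d ∧ WeakLE i b d := by
  induction h with
  | refl => exact ⟨b, hb, .refl⟩
  | @tail c c' _ h ih =>
    obtain ⟨d, hd, hbd⟩ := ih
    rcases h with h | h
    · obtain ⟨d', hd', hdd'⟩ := hd.exists_of_connected h
      exact ⟨d', hd', hbd.tail (.inl hdd')⟩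
    · obtain ⟨d', e, f, hd', he, hf, hf'⟩ := hd.exists_of_succ h
      exact ⟨e, he, ((hbd.tail (.inl (hd'.connected le_rfl))).tail (.inr hf)).tail
        (.inl (hf'.connected le_rfl).symm)⟩

theorem WeakLE.connected_or_strictLT (h : WeakLE i a b) :
    Connected (i + 1) a b ∨ StrictLT i a b := by
  induction h with
  | refl => exact .inl .refl
  | tail h₁ h₂ ih =>
    rcases h₂ with h₂ | h₂
    · exact ih.imp (·.trans h₂) fun ⟨c, d, hc, hcd, hd⟩ ↦ ⟨c, d, hc, hcd, hd.tail (.inl h₂)⟩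
    · exact .inr ⟨_, _, h₁, h₂, .refl⟩

theorem WeakLE.connected_or_exists_step (h : WeakLE i a b) :
    Connected (i + 1) a b ∨ ∃ c d, Connected (i + 1) a c ∧ Step i c d ∧ WeakLE i d b := by
  induction h using ReflTransGen.head_induction_on with
  | refl => exact .inl .refl
  | head h₁ h₂ ih =>
    rcases h₁ with h₁ | h₁
    · exact ih.imp h₁.trans fun ⟨c, d, hc, hcd, hd⟩ ↦ ⟨c, d, h₁.trans hc, hcd, hd⟩
    · exact .inr ⟨_, _, .refl, h₁, h₂⟩

theorem Step.inv_mul_eq (h : Step i a b) : (toBraid n a)⁻¹ * toBraid n b = genσ n i := by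
  rw [h.2, map_mul, inv_mul_cancel_left, toBraid_σ]

theorem Connected.inv_mul_mem (h : Connected (i + 1) a b) :
    (toBraid n a)⁻¹ * toBraid n b ∈ sigmaNonneg n i := by
  refine inv_mul_mem_of_reflTransGen (f := fun a ↦ toBraid n a.1) ?_ h
  rintro a b (⟨j, hj, h⟩ | ⟨j, hj, h⟩)
  · rw [h.inv_mul_eq]; exact genσ_mem_sigmaNonneg (by omega)
  · rw [← inv_inv ((toBraid n a)⁻¹ * _), mul_inv_rev, inv_inv, h.inv_mul_eq]
    exact genσ_inv_mem_sigmaNonneg hj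

theorem WeakLE.inv_mul_mem (h : WeakLE i a b) :
    (toBraid n a)⁻¹ * toBraid n b ∈ sigmaNonneg n i := by
  refine inv_mul_mem_of_reflTransGen (f := fun a ↦ toBraid n a.1) ?_ h
  rintro a b (h | h)
  · exact h.inv_mul_mem
  · rw [h.inv_mul_eq]; exact genσ_mem_sigmaNonneg le_rfl

theorem StrictLT.sigmaPositive (h : StrictLT i a b) :
    SigmaPositive n i ((toBraid n a)⁻¹ * toBraid n b) := by
  obtain ⟨c, d, hc, hcd, hd⟩ := h
  refine sigmaPositive_iff.2 ⟨hcd.1.1, hcd.1.2, _, hc.inv_mul_mem, _, hd.inv_mul_mem, ?_⟩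
  rw [← hcd.inv_mul_eq]
  group

theorem StrictLT.trans (h : StrictLT i a b) (h' : StrictLT i b c) : StrictLT i a c := by
  obtain ⟨x, y, hx, hxy, hy⟩ := h
  obtain ⟨x', y', hx', hxy', hy'⟩ := h'
  exact ⟨x, y, hx, hxy, (hy.trans hx').trans (ReflTransGen.head (.inr hxy') hy')⟩

instance instFinite (Ω : ArtinBraidMonoid n) : Finite (Divisor Ω) := by
  refine ((finite_setOf_length_le Ω.length).subset fun e he ↦ ?_).to_subtype
  obtain ⟨r, rfl⟩ := he
  simp

theorem wellFounded_strictLT (i : ℕ) :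
    WellFounded fun a b : Divisor Ω ↦ StrictLT i b a := by
  have : IsTrans (Divisor Ω) fun a b ↦ StrictLT i b a := ⟨fun _ _ _ h h' ↦ h'.trans h⟩
  have : Std.Irrefl fun a b : Divisor Ω ↦ StrictLT i b a :=
    ⟨fun a h ↦ h.sigmaPositive.ne_one (inv_mul_cancel _)⟩
  exact Finite.wellFounded_of_trans_of_irrefl _

/-- The divisors connected by edges of index at least `i` are totally preordered by `WeakLE i`. -/
def TotalFrom (Ω : ArtinBraidMonoid n) (i : ℕ) : Prop :=
  ∀ a b : Divisor Ω, Connected i a b → WeakLE i a b ∨ WeakLE i b a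

theorem TotalFrom.weakLE_total_of_weakLE (hΩ : TotalFrom Ω (i + 1)) (hb : WeakLE i a b)
    (hc : WeakLE i a c) : WeakLE i b c ∨ WeakLE i c b := by
  induction a using (wellFounded_strictLT i).induction generalizing b c with
  | h a ih =>
    rcases hb.connected_or_exists_step with h | ⟨x, y, hx, hxy, hy⟩
    · exact .inl (.head (.inl h.symm) hc)
    rcases hc.connected_or_exists_step with h | ⟨x', y', hx', hxy', hy'⟩
    · exact .inr (.head (.inl h.symm) hb)
    rcases hΩ x x' (hx.symm.trans hx') with h | h
    · obtain ⟨z, hz, hyz⟩ := hxy.exists_of_weakLE h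
      rw [hz.eq_of_step hxy'] at hyz
      exact ih y ⟨x, y, .single (.inl hx), hxy, .refl⟩ hy (hyz.trans hy')
    · obtain ⟨z, hz, hyz⟩ := hxy'.exists_of_weakLE h
      rw [hz.eq_of_step hxy] at hyz
      exact ih y' ⟨x', y', .single (.inl hx'), hxy', .refl⟩ (hyz.trans hy) hy'

theorem stepFrom_locally_confluent (hb : StepFrom i b a) (hc : StepFrom i c a) :
    Join (ReflTransGen (flip (StepFrom i))) b c := by
  obtain ⟨j, hj, hb⟩ := hb
  obtain ⟨k, hk, hc⟩ := hc
  have h := hb.2.symm.trans hc.2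
  have down (l : ℕ) (hl : l ∈ Set.Ico 1 n) (hil : i ≤ l) (x : Divisor Ω) (z : ArtinBraidMonoid n)
      (hx : x.1 = z * gen ⟨l, hl⟩) : ∃ y : Divisor Ω, y.1 = z ∧ StepFrom i y x := by
    rw [show gen ⟨l, hl⟩ = σ n l from (σ_val ⟨l, hl⟩).symm] at hx
    exact ⟨⟨z, (Dvd.intro _ hx.symm).trans x.2⟩, rfl, l, hil, hl, hx⟩
  rw [σ, σ, dif_pos hb.1, dif_pos hc.1] at h
  rcases eq_or_exists_of_mul_gen_eq (braidGraph_cliqueFree n) h with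
    ⟨-, h⟩ | ⟨-, z, hbz, hcz⟩ | ⟨-, z, hbz, hcz⟩
  · exact ⟨b, .refl, by rw [Subtype.ext h]⟩
  · obtain ⟨y, hy, hyb⟩ := down k hc.1 hk b z hbz
    obtain ⟨y', hy', hyc⟩ := down j hb.1 hj c z hcz
    obtain rfl : y = y' := Subtype.ext (hy.trans hy'.symm)
    exact ⟨y, .single hyb, .single hyc⟩
  · obtain ⟨x, hx, hxb⟩ := down k hc.1 hk b _ hbz
    obtain ⟨y, hy, hyx⟩ := down j hb.1 hj x z hx
    obtain ⟨x', hx', hxc⟩ := down j hb.1 hj c _ hcz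
    obtain ⟨y', hy', hyx'⟩ := down k hc.1 hk x' z hx'
    obtain rfl : y = y' := Subtype.ext (hy.trans hy'.symm)
    exact ⟨y, .head hxb (.single hyx), .head hxc (.single hyx')⟩

theorem Connected.join (h : Connected i a b) : Join (ReflTransGen (flip (StepFrom i))) a b := by
  have wf : WellFounded (flip (flip (StepFrom (Ω := Ω) i))) :=
    Subrelation.wf (fun ⟨_, _, h⟩ ↦ h.length_lt) (measure fun a : Divisor Ω ↦ a.1.length).wf
  induction h with
  | refl => exact ⟨a, .refl, .refl⟩
  | @tail b c _ h ih =>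
    obtain ⟨x, hax, hbx⟩ := ih
    rcases h with h | h
    · exact ⟨x, hax, .head h hbx⟩
    · obtain ⟨y, hxy, hcy⟩ := join_reflTransGen_of_locally_confluent wf
        (fun _ _ _ ↦ stepFrom_locally_confluent) hbx (ReflTransGen.single h)
      exact ⟨y, hax.trans hxy, hcy⟩

theorem weakLE_of_reflTransGen (h : ReflTransGen (flip (StepFrom i)) b a) : WeakLE i a b := by
  induction h using ReflTransGen.head_induction_on with
  | refl => exact .refl
  | head h _ ih =>
    obtain ⟨j, hj, h⟩ := h
    rcases hj.eq_or_lt with rfl | hj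
    · exact ih.tail (.inr h)
    · exact ih.tail (.inl (h.connected hj))

theorem Connected.eq (h : Connected i a b) (hn : n ≤ i) : a = b := by
  induction h with
  | refl => rfl
  | tail _ h => rcases h with ⟨j, hj, h⟩ | ⟨j, hj, h⟩ <;> exact absurd h.1.2 (by omega)

theorem totalFrom (Ω : ArtinBraidMonoid n) (i : ℕ) : TotalFrom Ω i := by
  induction hk : n - i generalizing i with
  | zero => exact fun a b h ↦ .inl (h.eq (by omega) ▸ .refl)
  | succ k ih =>
    intro a b h
    obtain ⟨c, ha, hb⟩ := h.join
    exact (ih (i + 1) (by omega)).weakLE_total_of_weakLE (weakLE_of_reflTransGen ha)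
      (weakLE_of_reflTransGen hb)

theorem Connected.trichotomy (h : Connected i a b) :
    a = b ∨ ∃ j, StrictLT j a b ∨ StrictLT j b a := by
  induction hk : n - i generalizing i with
  | zero => exact .inl (h.eq (by omega))
  | succ k ih =>
    rcases totalFrom Ω i a b h with h | h
    · rcases h.connected_or_strictLT with h | h
      · exact ih h (by omega)
      · exact .inr ⟨i, .inl h⟩
    · rcases h.connected_or_strictLT with h | h
      · exact ih h.symm (by omega)
      · exact .inr ⟨i, .inr h⟩

theorem connected_of_eq_mul {x : ArtinBraidMonoid n} (h : b.1 = a.1 * x) : Connected 1 a b := by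
  induction x using ArtinMonoid.induction_on generalizing a with
  | one => rw [mul_one] at h; rw [Subtype.ext h]; exact .refl
  | gen_mul i x ih =>
    rw [← σ_val, ← mul_assoc] at h
    let c : Divisor Ω := ⟨a.1 * σ n i, (Dvd.intro _ h.symm).trans b.2⟩
    exact (Step.connected ⟨i.2, rfl⟩ i.2.1).trans (ih (a := c) h)

end Divisor

end ArtinBraidMonoid

section Trichotomy

open ArtinBraidMonoid

variable {n : ℕ}

theorem toBraid_fullTwist : toBraid n (fullTwist n (σ n)) = fullTwist n (genσ n) := by
  rw [map_fullTwist]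
  exact congrArg _ (funext toBraid_σ)

theorem Braid.commute_fullTwist (g : Braid n) : Commute (fullTwist n (genσ n)) g := by
  induction g using Braid.induction_on with
  | one => exact .one_right _
  | gen i hi hin => exact (braidRelations_genσ n).commute_fullTwist hi hin
  | mul a b ha hb => exact ha.mul_right hb
  | inv a ha => exact ha.inv_right

theorem exists_fullTwist_pow_mul_eq (g : Braid n) :
    ∃ k e, fullTwist n (genσ n) ^ k * g = toBraid n e := by
  induction g using Braid.induction_on with
  | one => exact ⟨0, 1, by simp⟩
  | gen i => exact ⟨0, σ n i, by rw [pow_zero, one_mul, toBraid_σ]⟩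
  | mul a b ha hb =>
    obtain ⟨k, e, he⟩ := ha
    obtain ⟨l, f, hf⟩ := hb
    refine ⟨l + k, e * f, ?_⟩
    rw [map_mul, ← he, ← hf, pow_add, mul_assoc, ← mul_assoc _ a b,
      ((Braid.commute_fullTwist _).pow_left l).left_comm]
  | inv a ha =>
    obtain ⟨k, e, he⟩ := ha
    obtain ⟨r, hr⟩ := dvd_fullTwist_pow e le_rfl
    refine ⟨e.length, r * fullTwist n (σ n) ^ k, ?_⟩
    have hr' := congrArg (toBraid n) hr
    rw [map_pow, toBraid_fullTwist, map_mul, ← he] at hr'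
    rw [map_mul, map_pow, toBraid_fullTwist, ((Braid.commute_fullTwist _).pow_left _).eq, hr',
      ((Braid.commute_fullTwist _).pow_left k).eq]
    simp only [mul_assoc, inv_mul_cancel_left,
      ((Braid.commute_fullTwist (toBraid n r)).pow_left k).eq]

theorem eq_one_or_sigmaPositive_or_sigmaPositive_inv (g : Braid n) :
    g = 1 ∨ ∃ i, SigmaPositive n i g ∨ SigmaPositive n i g⁻¹ := by
  obtain ⟨k, e, he⟩ := exists_fullTwist_pow_mul_eq g
  have hg : g = (toBraid n (fullTwist n (σ n) ^ k))⁻¹ * toBraid n e := by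
    rw [← he, map_pow, toBraid_fullTwist, inv_mul_cancel_left]
  let Ω := fullTwist n (σ n) ^ max k e.length
  let a : Divisor Ω := ⟨fullTwist n (σ n) ^ k, pow_dvd_pow _ (le_max_left _ _)⟩
  let b : Divisor Ω := ⟨e, dvd_fullTwist_pow e (le_max_right _ _)⟩
  let o : Divisor Ω := ⟨1, one_dvd _⟩
  have hoa : Divisor.Connected 1 o a := Divisor.connected_of_eq_mul (one_mul _).symm
  have hob : Divisor.Connected 1 o b := Divisor.connected_of_eq_mul (one_mul _).symm
  rcases Divisor.Connected.trichotomy (hoa.symm.trans hob) with h | ⟨i, h | h⟩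
  · left
    rw [hg, show e = fullTwist n (σ n) ^ k from congrArg Subtype.val h.symm, inv_mul_cancel]
  · exact .inr ⟨i, .inl (hg ▸ h.sigmaPositive)⟩
  · refine .inr ⟨i, .inr ?_⟩
    rw [hg, mul_inv_rev, inv_inv]
    exact h.sigmaPositive

end Trichotomy

/-! ### The Dehornoy order and the subword order -/

section Order

variable {n : ℕ}

/-- The pointwise order on braids acting on reduced words. Unlike the Dehornoy order, to which it is
related by `not_le_of_dehornoyLt`, it is invariant under multiplication on both sides. -/
instance (n : ℕ) : Preorder (Braid n) := Preorder.lift fun g (x : ReducedWord) ↦ g • x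

theorem Braid.le_def {g h : Braid n} : g ≤ h ↔ ∀ x : ReducedWord, g • x ≤ h • x := Iff.rfl

instance (n : ℕ) : MulLeftMono (Braid n) where
  elim a b c h := Braid.le_def.2 fun x ↦ by
    rw [mul_smul, mul_smul, smul_le_smul_iff]
    exact h x

instance (n : ℕ) : MulRightMono (Braid n) where
  elim a b c h := Braid.le_def.2 fun x ↦ by
    change (b * a) • x ≤ (c * a) • x
    rw [mul_smul, mul_smul]
    exact h (a • x)

theorem Braid.one_le_conj_genσ (g : Braid n) (i : ℕ) : 1 ≤ g * genσ n i * g⁻¹ :=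
  Braid.le_def.2 fun x ↦ by
    rw [one_smul, mul_smul, mul_smul, ← smul_le_smul_iff g⁻¹, inv_smul_smul]
    exact le_genσ_smul i _

theorem not_le_of_dehornoyLt {g h : Braid n} (hgh : dehornoyLt n g h) : ¬ h ≤ g := by
  obtain ⟨i, -, -, hi⟩ := hgh
  intro hle
  have := (smul_lt_smul_iff g).2 hi.single_lt_smul
  rw [← mul_smul, mul_inv_cancel_left] at this
  exact this.not_ge (hle _)

theorem dehornoyLt_of_sigmaPositive {i : ℕ} {g h : Braid n} (hi : SigmaPositive n i (g⁻¹ * h)) :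
    dehornoyLt n g h :=
  have := sigmaPositive_iff.1 hi
  ⟨i, this.1, Nat.le_sub_one_of_lt this.2.1, hi⟩

instance (n : ℕ) : IsStrictTotalOrder (Braid n) (dehornoyLt n) where
  irrefl g h := not_le_of_dehornoyLt h le_rfl
  trans := by
    rintro a b c ⟨i, -, -, hi⟩ ⟨j, -, -, hj⟩
    exact dehornoyLt_of_sigmaPositive (by simpa [mul_assoc] using hi.mul hj)
  trichotomous g h hgh hhg := by
    rcases eq_one_or_sigmaPositive_or_sigmaPositive_inv (g⁻¹ * h) with h1 | ⟨i, hi | hi⟩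
    · exact inv_mul_eq_one.1 h1
    · exact absurd (dehornoyLt_of_sigmaPositive hi) hgh
    · exact absurd (dehornoyLt_of_sigmaPositive (by rwa [mul_inv_rev, inv_inv] at hi)) hhg

end Order

/-! ### Relations between band generators -/

section Band

variable {n p q r : ℕ}

theorem one_le_band (n p q : ℕ) : 1 ≤ band n p q := Braid.one_le_conj_genσ _ _

theorem band_self_succ (n p : ℕ) : band n p (p + 1) = genσ n p := by simp [band]

theorem band_succ (hpq : p < q) : band n p (q + 1) = genσ n q * band n p q * (genσ n q)⁻¹ := by
  rw [band, band, show q + 1 - 1 - p = (q - 1 - p) + 1 by omega, List.range'_1_concat,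
    show p + 1 + (q - 1 - p) = q by omega, List.reverse_append, List.map_append, List.prod_append]
  simp only [List.reverse_singleton, List.map_cons, List.map_nil, List.prod_cons, List.prod_nil,
    mul_one]
  group

theorem commute_genσ_band (hp : 1 ≤ p) (hpq : p < q) (hqr : q < r) (hr : r < n) :
    Commute (genσ n r) (band n p q) := by
  induction q, hpq using Nat.le_induction with
  | base => rw [Nat.succ_eq_add_one, band_self_succ]; exact (genσ_comm hp hqr hr).symm
  | succ q hpq ih =>
    have hq : Commute (genσ n r) (genσ n q) := (genσ_comm (by omega) hqr hr).symm
    rw [band_succ hpq]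
    exact (hq.mul_right (ih (by omega))).mul_right hq.inv_right

/-- Conjugation by `σ_r` raises a statement about `a_{p,q}`, `a_{p,r}`, `a_{q,r}` to one about
`a_{p,q}`, `a_{p,r+1}`, `a_{q,r+1}`. -/
theorem band_eq_conj (hp : 1 ≤ p) (hpq : p < q) (hqr : q < r) (hr : r < n) :
    band n p q = genσ n r * band n p q * (genσ n r)⁻¹ := by
  rw [(commute_genσ_band hp hpq hqr hr).eq, mul_inv_cancel_right]

theorem band_mul_band (hp : 1 ≤ p) (hpq : p < q) (hqr : q < r) (hr : r ≤ n) :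
    band n p r * band n q r = band n q r * band n p q := by
  induction r, hqr using Nat.le_induction with
  | base => rw [Nat.succ_eq_add_one, band_self_succ, band_succ hpq, inv_mul_cancel_right]
  | succ r hq ih =>
    rw [band_succ (hpq.trans hq), band_succ hq, band_eq_conj hp hpq hq (by omega)]
    simp only [conj_mul, ih (by omega)]

theorem genσ_band_braid (hp : 1 ≤ p) (hpq : p < q) (hq : q < n) :
    genσ n q * band n p q * genσ n q = band n p q * genσ n q * band n p q := by
  induction q, hpq using Nat.le_induction with
  | base => rw [Nat.succ_eq_add_one, band_self_succ]; exact (genσ_braid hp hq).symm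
  | succ q hpq ih =>
    have ht := commute_genσ_band hp hpq (Nat.lt_succ_self q) hq
    have hs : genσ n q * band n p q * (genσ n q)⁻¹ =
        (band n p q)⁻¹ * genσ n q * band n p q := by
      rw [mul_inv_eq_iff_eq_mul, mul_assoc, mul_assoc, eq_inv_mul_iff_mul_eq, ← mul_assoc,
        ← mul_assoc, ih (by omega)]
    have ht' : genσ n (q + 1) = (band n p q)⁻¹ * genσ n (q + 1) * band n p q := by
      rw [mul_assoc, ht.eq, inv_mul_cancel_left]
    rw [band_succ hpq, hs, ht']
    have := congrArg (MulAut.conj (band n p q)⁻¹) (genσ_braid (hp.trans (Nat.le_of_succ_le hpq)) hq)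
    simpa only [map_mul, MulAut.conj_apply, inv_inv] using this.symm

theorem band_braid (hp : 1 ≤ p) (hpq : p < q) (hqr : q < r) (hr : r ≤ n) :
    band n q r * band n p q * band n q r = band n p q * band n q r * band n p q := by
  induction r, hqr using Nat.le_induction with
  | base => rw [Nat.succ_eq_add_one, band_self_succ]; exact genσ_band_braid hp hpq hr
  | succ r hq ih =>
    rw [band_succ hq, band_eq_conj hp hpq hq (by omega)]
    simp only [conj_mul, ih (by omega)]

theorem band_mul_band' (hp : 1 ≤ p) (hpq : p < q) (hqr : q < r) (hr : r ≤ n) :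
    band n p q * band n p r = band n q r * band n p q := by
  rw [eq_mul_inv_of_mul_eq (band_mul_band hp hpq hqr hr), ← mul_assoc, ← mul_assoc,
    mul_inv_eq_iff_eq_mul, band_braid hp hpq hqr hr]

/-- The band generators as a function of an unordered pair, with the value `1` on the diagonal. -/
def symmBand (n : ℕ) (i j : Set.Icc 1 n) : Braid n :=
  if i = j then 1 else band n (min i j) (max i j)

theorem symmBand_self (i : Set.Icc 1 n) : symmBand n i i = 1 := if_pos rfl

theorem symmBand_comm (i j : Set.Icc 1 n) : symmBand n i j = symmBand n j i := by
  simp only [symmBand, eq_comm, min_comm, max_comm]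

theorem symmBand_of_lt {i j : Set.Icc 1 n} (h : i < j) : symmBand n i j = band n i j := by
  rw [symmBand, if_neg h.ne, min_eq_left (Subtype.coe_le_coe.2 h.le),
    max_eq_right (Subtype.coe_le_coe.2 h.le)]

theorem one_le_symmBand (i j : Set.Icc 1 n) : 1 ≤ symmBand n i j := by
  unfold symmBand
  split_ifs
  exacts [le_rfl, one_le_band _ _ _]

theorem symmBand_mul_of_lt_of_lt {i j k : Set.Icc 1 n} (hij : i < j) (hjk : j < k) :
    symmBand n i k * symmBand n j k = symmBand n j k * symmBand n i j ∧
      symmBand n i j * symmBand n i k = symmBand n j k * symmBand n i j := by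
  rw [symmBand_of_lt hij, symmBand_of_lt hjk, symmBand_of_lt (hij.trans hjk)]
  exact ⟨band_mul_band i.2.1 hij hjk k.2.2, band_mul_band' i.2.1 hij hjk k.2.2⟩

theorem symmBand_triangle (i j k : Set.Icc 1 n) :
    symmBand n i k ≤ symmBand n i j * symmBand n j k ∨
      symmBand n i k ≤ symmBand n j k * symmBand n i j := by
  have left (a : Braid n) (p q) : a ≤ a * symmBand n p q :=
    le_mul_of_one_le_right' (one_le_symmBand p q)
  have right (a : Braid n) (p q) : a ≤ symmBand n p q * a :=
    le_mul_of_one_le_left' (one_le_symmBand p q)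
  wlog hik : i ≤ k generalizing i k
  · rw [symmBand_comm i k, symmBand_comm i j, symmBand_comm j k]
    exact (this k i (not_le.1 hik).le).symm
  rcases hik.eq_or_lt with rfl | hik
  · rw [symmBand_self, symmBand_comm j i]
    exact .inl ((one_le_symmBand _ _).trans (left _ _ _))
  rcases lt_trichotomy j i with hij | rfl | hij
  · rw [symmBand_comm i j, (symmBand_mul_of_lt_of_lt hij hik).2]
    exact .inl (left _ _ _)
  · exact .inl (right _ _ _)
  rcases lt_trichotomy j k with hjk | rfl | hjk
  · exact .inr ((symmBand_mul_of_lt_of_lt hij hjk).1 ▸ left _ _ _)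
  · exact .inl (left _ _ _)
  · rw [symmBand_comm j k, (symmBand_mul_of_lt_of_lt hik hjk).1]
    exact .inl (right _ _ _)

end Band

/-! ### Natural sum of ordinals -/

section NaturalSum

open Ordinal

theorem cnfEval_lt_cnfEval {b e : Ordinal.{u}} {f g : Ordinal.{u} →₀ Ordinal.{u}}
    (hf : ∀ e, f e < b) (hlt : f e < g e) (heq : ∀ e', e < e' → f e' = g e') :
    CNF.eval b f < CNF.eval b g := by
  have split (f : Ordinal.{u} →₀ Ordinal.{u}) : CNF.eval b f =
      CNF.eval b (f.filter (e < ·)) + (b ^ e * f e + CNF.eval b (f.filter (· < e))) := by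
    rw [← CNF.eval_single_add' b (by simp), ← CNF.eval_add b]
    · congr 1
      ext e'
      rcases lt_trichotomy e e' with h | rfl | h
      · simp [h, h.ne, h.not_gt]
      · simp
      · simp [h, h.ne', h.not_gt]
    · intro e₁ h₁ e₂ h₂
      simp only [Finsupp.support_filter, Finset.mem_filter] at h₁
      contrapose! h₂
      have := h₁.2.trans h₂
      simp [this.ne, this.not_gt]
  have hfilter : f.filter (e < ·) = g.filter (e < ·) := by
    ext e'
    by_cases h : e < e' <;> simp [h, heq e']
  rw [split f, split g, hfilter]
  gcongr _ + ?_
  calc b ^ e * f e + CNF.eval b (f.filter (· < e))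
      < b ^ e * f e + b ^ e := by
        gcongr
        refine CNF.eval_lt (fun e' ↦ ?_) (by simp)
        rw [Finsupp.filter_apply]
        split_ifs
        exacts [hf e', (hf e').pos]
    _ = b ^ e * (f e + 1) := (mul_add_one _ _).symm
    _ ≤ b ^ e * g e := by gcongr; exact Order.add_one_le_of_lt hlt
    _ ≤ b ^ e * g e + CNF.eval b (g.filter (· < e)) := le_self_add

theorem cnfCoeff_lt {b : Ordinal.{u}} (hb : 1 < b) (x e : Ordinal.{u}) : CNF.coeff b x e < b := by
  by_cases h : e ∈ (CNF b x).map Prod.fst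
  · obtain ⟨p, hp, rfl⟩ := List.mem_map.1 h
    rw [CNF.coeff_of_mem_CNF hp]
    exact CNF.snd_lt hb hp
  · rw [CNF.coeff_of_notMem_CNF h]
    exact zero_lt_one.trans hb

theorem exists_cnfCoeff_lt_cnfCoeff {b x y : Ordinal.{u}} (hb : 1 < b) (h : x < y) :
    ∃ e, CNF.coeff b x e < CNF.coeff b y e ∧
      ∀ e', e < e' → CNF.coeff b x e' = CNF.coeff b y e' := by
  classical
  let s := {e ∈ (CNF.coeff b x).support ∪ (CNF.coeff b y).support |
    CNF.coeff b x e ≠ CNF.coeff b y e}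
  have mem_s {e} : e ∈ s ↔ CNF.coeff b x e ≠ CNF.coeff b y e := by
    simp only [s, Finset.mem_filter, Finset.mem_union, Finsupp.mem_support_iff]
    grind
  have hs : s.Nonempty := by
    obtain ⟨e, he⟩ := Finsupp.ne_iff.1 ((CNF.coeff_injective b).ne h.ne)
    exact ⟨e, mem_s.2 he⟩
  have heq (e') (he' : s.max' hs < e') : CNF.coeff b x e' = CNF.coeff b y e' :=
    by_contra fun hne ↦ (s.le_max' e' (mem_s.2 hne)).not_gt he'
  refine ⟨s.max' hs, (mem_s.1 (s.max'_mem hs)).lt_or_gt.resolve_right fun hlt ↦ ?_, heq⟩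
  have := cnfEval_lt_cnfEval (cnfCoeff_lt hb y) hlt fun e' he' ↦ (heq e' he').symm
  rw [CNF.eval_coeff, CNF.eval_coeff] at this
  exact h.not_gt this

/-- The natural (Hessenberg) sum of ordinals: Cantor normal forms are added coefficientwise. -/
noncomputable def natSum (a b : Ordinal.{u}) : Ordinal.{u} :=
  CNF.eval ω (CNF.coeff ω a + CNF.coeff ω b)

theorem cnfCoeff_add_cnfCoeff_lt_omega0 (a b e : Ordinal.{u}) :
    (CNF.coeff ω a + CNF.coeff ω b) e < ω :=
  isPrincipal_add_omega0 (cnfCoeff_lt one_lt_omega0 a e) (cnfCoeff_lt one_lt_omega0 b e)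

theorem natSum_comm (a b : Ordinal.{u}) : natSum a b = natSum b a := by
  unfold natSum
  congr 1
  ext e
  obtain ⟨k, hk⟩ := lt_omega0.1 (cnfCoeff_lt one_lt_omega0 a e)
  obtain ⟨l, hl⟩ := lt_omega0.1 (cnfCoeff_lt one_lt_omega0 b e)
  rw [Finsupp.add_apply, Finsupp.add_apply, hk, hl]
  exact_mod_cast Nat.add_comm k l

theorem natSum_lt_natSum_right (a : Ordinal.{u}) {b b' : Ordinal.{u}} (h : b < b') :
    natSum a b < natSum a b' := by
  obtain ⟨e, hlt, heq⟩ := exists_cnfCoeff_lt_cnfCoeff one_lt_omega0 h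
  refine cnfEval_lt_cnfEval (e := e) (cnfCoeff_add_cnfCoeff_lt_omega0 a b) ?_ fun e' he' ↦ ?_
  · simpa
  · simp [heq e' he']

theorem natSum_lt_natSum_left {a a' : Ordinal.{u}} (h : a < a') (b : Ordinal.{u}) :
    natSum a b < natSum a' b := by
  rw [natSum_comm a, natSum_comm a']
  exact natSum_lt_natSum_right b h

theorem natSum_le_natSum {a a' b b' : Ordinal.{u}} (ha : a ≤ a') (hb : b ≤ b') :
    natSum a b ≤ natSum a' b' :=
  calc natSum a b ≤ natSum a b' := StrictMono.monotone (fun _ _ ↦ natSum_lt_natSum_right a) hb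
    _ ≤ natSum a' b' := StrictMono.monotone (fun _ _ h ↦ natSum_lt_natSum_left h b') ha

theorem natSum_lt_opow {a b c : Ordinal.{u}} (ha : a < ω ^ c) (hb : b < ω ^ c) :
    natSum a b < ω ^ c := by
  refine CNF.eval_lt (cnfCoeff_add_cnfCoeff_lt_omega0 a b) fun e he ↦ ?_
  contrapose! he
  have hle : ω ^ c ≤ ω ^ e := opow_le_opow_right omega0_pos he
  simp [CNF.coeff_eq_zero_of_lt (ha.trans_le hle), CNF.coeff_eq_zero_of_lt (hb.trans_le hle)]

end NaturalSum

/-! ### Thin sets -/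

section Thin

open Ordinal
open scoped Pointwise

variable {M : Type u} [Preorder M] {γ γ' : Ordinal.{u}} {S T : Set M}

/-- A set is `γ`-thin if it is a finite union of pieces `T` such that for some `g < γ`, every
residue `{x ∈ T | ¬ a ≤ x}` with `a ∈ T` is `g`-thin. By `Thin.exists_rankBounded` this bounds the
heights of well-founded relations that contain no pair `(x, a)` with `a ≤ x`. -/
inductive Thin : Ordinal.{u} → Set M → Prop
  | empty (γ : Ordinal.{u}) : Thin γ ∅
  | mono {γ : Ordinal.{u}} {S T : Set M} (hT : Thin γ T) (hST : S ⊆ T) : Thin γ S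
  | union {γ : Ordinal.{u}} {S T : Set M} (hS : Thin γ S) (hT : Thin γ T) : Thin γ (S ∪ T)
  | of_residues {g γ : Ordinal.{u}} {T : Set M} (hg : g < γ)
      (hT : ∀ a ∈ T, Thin g {x ∈ T | ¬ a ≤ x}) : Thin γ T

variable (γ T) in
/-- All residues `{x ∈ T | ¬ a ≤ x}` with `a ∈ T` are `γ`-thin, so that the residually `γ`-thin sets
are the pieces of the `γ'`-thin sets for `γ < γ'`. -/
def ResiduallyThin : Prop :=
  ∀ a ∈ T, Thin γ {x ∈ T | ¬ a ≤ x}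

theorem Thin.eq_empty (hT : Thin γ T) (hγ : γ = 0) : T = ∅ := by
  induction hT with
  | empty γ => rfl
  | mono _ hST ih => exact Set.subset_empty_iff.1 (hST.trans (ih hγ).subset)
  | union _ _ ihS ihT => rw [ihS hγ, ihT hγ, Set.union_self]
  | of_residues hg => exact absurd (hγ ▸ hg) not_lt_zero

theorem Thin.biUnion {ι : Type*} {s : Set ι} (hs : s.Finite) {T : ι → Set M}
    (hT : ∀ i ∈ s, Thin γ (T i)) : Thin γ (⋃ i ∈ s, T i) := by
  induction s, hs using Set.Finite.induction_on with
  | empty => simpa using .empty _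
  | insert _ _ ih =>
    rw [Set.biUnion_insert]
    exact .union (hT _ (Set.mem_insert _ _)) (ih fun i hi ↦ hT i (Set.mem_insert_of_mem _ hi))

theorem Thin.of_forall_le (hγ : 0 < γ) (hT : ∀ a ∈ T, ∀ x ∈ T, a ≤ x) : Thin γ T :=
  .of_residues hγ fun a ha ↦ .mono (.empty 0) fun x hx ↦ hx.2 (hT a ha x hx.1)

section Mul

variable [Monoid M] [MulLeftMono M] [MulRightMono M]

theorem residuallyThin_mul_of_residue_mul
    (hS : ∀ a ∈ S, Thin γ ({x ∈ S | ¬ a ≤ x} * T))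
    (hT : ∀ b ∈ T, Thin γ (S * {x ∈ T | ¬ b ≤ x})) : ResiduallyThin γ (S * T) := by
  rintro _ ⟨a, ha, b, hb, rfl⟩
  refine .mono (.union (hS a ha) (hT b hb)) ?_
  rintro _ ⟨⟨u, hu, v, hv, rfl⟩, huv⟩
  by_cases hau : a ≤ u
  · exact .inr ⟨u, hu, v, ⟨hv, fun hbv ↦ huv (mul_le_mul' hau hbv)⟩, rfl⟩
  · exact .inl ⟨u, ⟨hu, hau⟩, v, hv, rfl⟩

theorem Thin.mul_of_residue_mul (hT : Thin γ' T)
    (hS : ∀ a ∈ S, ∀ g U, ResiduallyThin g U → Thin (natSum γ g) ({x ∈ S | ¬ a ≤ x} * U)) :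
    Thin (natSum γ γ') (S * T) := by
  induction hT with
  | empty => rw [Set.mul_empty]; exact .empty _
  | mono _ hST ih => exact .mono ih (Set.mul_subset_mul_left hST)
  | union _ _ ihS ihT => rw [Set.mul_union]; exact .union ihS ihT
  | of_residues hg hT ih =>
    exact .of_residues (natSum_lt_natSum_right γ hg)
      (residuallyThin_mul_of_residue_mul (fun a ha ↦ hS a ha _ _ hT) ih)

theorem Thin.mul_residuallyThin (hS : Thin γ S) (hT : ResiduallyThin γ' T) :
    Thin (natSum γ γ') (S * T) := by
  induction hS generalizing γ' T with
  | empty => rw [Set.empty_mul]; exact .empty _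
  | mono _ hST ih => exact .mono (ih hT) (Set.mul_subset_mul_right hST)
  | union _ _ ihS ihT => rw [Set.union_mul]; exact .union (ihS hT) (ihT hT)
  | of_residues hg _ ih =>
    exact .of_residues (natSum_lt_natSum_left hg γ')
      (residuallyThin_mul_of_residue_mul (fun a ha ↦ ih a ha hT)
        fun b hb ↦ (hT b hb).mul_of_residue_mul fun a ha _ _ hU ↦ ih a ha hU)

theorem ResiduallyThin.mul (hS : ResiduallyThin γ S) (hT : ResiduallyThin γ' T) :
    ResiduallyThin (natSum γ γ') (S * T) :=
  residuallyThin_mul_of_residue_mul (fun a ha ↦ (hS a ha).mul_residuallyThin hT)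
    fun b hb ↦ (hT b hb).mul_of_residue_mul fun a ha _ _ hU ↦ (hS a ha).mul_residuallyThin hU

theorem Thin.mul (hS : Thin (ω ^ γ) S) (hT : Thin (ω ^ γ) T) : Thin (ω ^ γ) (S * T) := by
  generalize hδ : ω ^ γ = δ at hS hT
  induction hS with
  | empty => rw [Set.empty_mul]; exact .empty _
  | mono _ hST ih => exact .mono (ih hδ hT) (Set.mul_subset_mul_right hST)
  | union _ _ ihS ihT => rw [Set.union_mul]; exact .union (ihS hδ hT) (ihT hδ hT)
  | of_residues hg hS ih =>
    clear ih
    induction hT with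
    | empty => rw [Set.mul_empty]; exact .empty _
    | mono _ hST ih => exact .mono (ih hg hδ) (Set.mul_subset_mul_left hST)
    | union _ _ ihS ihT => rw [Set.mul_union]; exact .union (ihS hg hδ) (ihT hg hδ)
    | of_residues hg' hT =>
      subst hδ
      exact .of_residues (natSum_lt_opow hg hg') (ResiduallyThin.mul hS hT)

end Mul

end Thin

section Rank

open Ordinal

variable {M : Type u} (lt : M → M → Prop) {S T : Set M} {β : Ordinal.{u}} {f : M → Ordinal.{u}}

/-- The relation `lt` restricted to `T` has an ordinal rank function with values below `β`. -/
def RankBounded (T : Set M) (β : Ordinal.{u}) : Prop :=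
  ∃ f : M → Ordinal.{u}, (∀ x ∈ T, ∀ y ∈ T, lt x y → f x < f y) ∧ ∀ x ∈ T, f x < β

variable {lt}

theorem RankBounded.mono (hT : RankBounded lt T β) (hST : S ⊆ T) : RankBounded lt S β := by
  obtain ⟨f, hf, hfβ⟩ := hT
  exact ⟨f, fun x hx y hy ↦ hf x (hST hx) y (hST hy), fun x hx ↦ hfβ x (hST hx)⟩

theorem RankBounded.isWellOrder [Std.Trichotomous lt] (hT : RankBounded lt T β) :
    IsWellOrder T (Subrel lt (· ∈ T)) := by
  obtain ⟨f, hf, -⟩ := hT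
  have wf : IsWellFounded T (Subrel lt (· ∈ T)) :=
    ⟨Subrelation.wf (fun {x y} h ↦ hf x x.2 y y.2 h) (InvImage.wf (fun x : T ↦ f x) lt_wf)⟩
  exact { wf with }

theorem RankBounded.type_le [IsWellOrder T (Subrel lt (· ∈ T))] (hT : RankBounded lt T β) :
    type (Subrel lt (· ∈ T)) ≤ β := by
  obtain ⟨f, hf, hfβ⟩ := hT
  let F (x : T) : β.ToType := ToType.mk ⟨f x, hfβ x x.2⟩
  have hF (x y : T) (h : Subrel lt (· ∈ T) x y) : F x < F y :=
    ToType.mk.lt_iff_lt.2 (hf x x.2 y y.2 h)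
  exact (RelEmbedding.ofMonotone F hF).ordinal_type_le.trans_eq (type_toType β)

variable (lt S f) in
/-- The supremum of `f y + 1` over the elements `y` of `S` that are at most `x`: the extension to
all of `M` of a rank function `f` on `S`. -/
noncomputable def rankExtension (x : M) : Ordinal.{u} :=
  ⨆ y : {y : M // y ∈ S ∧ (y = x ∨ lt y x)}, f y + 1

theorem rankExtension_le (hf : ∀ x ∈ S, f x < β) (x : M) : rankExtension lt S f x ≤ β :=
  Ordinal.iSup_le fun y ↦ Order.add_one_le_of_lt (hf y y.2.1)

variable [IsTrans M lt]

theorem rankBounded_of_initialSegments (h : ∀ a ∈ T, ∃ c < β, RankBounded lt {x ∈ T | lt x a} c) :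
    RankBounded lt T β := by
  let height (a : M) : Ordinal.{u} := sInf {c | RankBounded lt {x ∈ T | lt x a} c}
  refine ⟨height, fun x hx y hy hxy ↦ ?_, fun a ha ↦ ?_⟩
  · obtain ⟨c, -, hc⟩ := h y hy
    obtain ⟨f, hf, hfy⟩ : RankBounded lt {x ∈ T | lt x y} (height y) :=
      csInf_mem (s := {c | RankBounded lt {x ∈ T | lt x y} c}) ⟨c, hc⟩
    have below {u} (hu : u ∈ {u ∈ T | lt u x}) : u ∈ {u ∈ T | lt u y} :=
      ⟨hu.1, _root_.trans hu.2 hxy⟩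
    have hfx : RankBounded lt {u ∈ T | lt u x} (f x) :=
      ⟨f, fun u hu v hv ↦ hf u (below hu) v (below hv),
        fun u hu ↦ hf u (below hu) x ⟨hx, hxy⟩ hu.2⟩
    exact (csInf_le' (s := {c | RankBounded lt {u ∈ T | lt u x} c}) hfx).trans_lt
      (hfy x ⟨hx, hxy⟩)
  · obtain ⟨c, hcβ, hc⟩ := h a ha
    exact (csInf_le' (s := {c | RankBounded lt {x ∈ T | lt x a} c}) hc).trans_lt hcβ

theorem rankExtension_mono {x y : M} (h : lt x y) :
    rankExtension lt S f x ≤ rankExtension lt S f y := by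
  refine Ordinal.iSup_le fun ⟨z, hz, hzx⟩ ↦ Ordinal.le_iSup
    (fun z : {z : M // z ∈ S ∧ (z = y ∨ lt z y)} ↦ f z + 1) ⟨z, hz, .inr ?_⟩
  rcases hzx with rfl | hzx
  exacts [h, _root_.trans hzx h]

theorem rankExtension_lt (hf : ∀ x ∈ S, ∀ y ∈ S, lt x y → f x < f y) {x y : M} (hy : y ∈ S)
    (h : lt x y) : rankExtension lt S f x < rankExtension lt S f y :=
  calc rankExtension lt S f x ≤ f y := by
        refine Ordinal.iSup_le fun ⟨z, hz, hzx⟩ ↦ Order.add_one_le_of_lt (hf z hz y hy ?_)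
        rcases hzx with rfl | hzx
        exacts [h, _root_.trans hzx h]
    _ < f y + 1 := lt_add_one _
    _ ≤ rankExtension lt S f y := Ordinal.le_iSup
      (fun z : {z : M // z ∈ S ∧ (z = y ∨ lt z y)} ↦ f z + 1) ⟨y, hy, .inl rfl⟩

theorem RankBounded.union {β' γ : Ordinal.{u}} (hγ : γ ≠ 0) (hβ : β < ω ^ γ) (hβ' : β' < ω ^ γ)
    (hS : RankBounded lt S β) (hT : RankBounded lt T β') :
    ∃ δ < ω ^ γ, RankBounded lt (S ∪ T) δ := by
  obtain ⟨f, hf, hfβ⟩ := hS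
  obtain ⟨g, hg, hgβ⟩ := hT
  refine ⟨natSum β β' + 1,
    (isSuccLimit_opow_left isSuccLimit_omega0 hγ).add_one_lt (natSum_lt_opow hβ hβ'),
    fun x ↦ natSum (rankExtension lt S f x) (rankExtension lt T g x), fun x _ y hy hxy ↦ ?_,
    fun x _ ↦ Order.lt_add_one_iff.2
      (natSum_le_natSum (rankExtension_le hfβ x) (rankExtension_le hgβ x))⟩
  rcases hy with hy | hy
  · exact (natSum_lt_natSum_left (rankExtension_lt hf hy hxy) _).trans_le
      (natSum_le_natSum le_rfl (rankExtension_mono hxy))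
  · exact (natSum_lt_natSum_right _ (rankExtension_lt hg hy hxy)).trans_le
      (natSum_le_natSum (rankExtension_mono hxy) le_rfl)

variable [Preorder M] {γ : Ordinal.{u}}

theorem Thin.exists_rankBounded (hlt : ∀ a x : M, lt x a → ¬ a ≤ x) (hT : Thin γ T) :
    ∃ β < ω ^ γ, RankBounded lt T β := by
  have empty (γ : Ordinal.{u}) : ∃ β < ω ^ γ, RankBounded lt ∅ β :=
    ⟨0, opow_pos _ omega0_pos, fun _ ↦ 0, by simp, by simp⟩
  induction hT with
  | empty γ => exact empty γ
  | mono _ hST ih =>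
    obtain ⟨β, hβ, hR⟩ := ih
    exact ⟨β, hβ, hR.mono hST⟩
  | @union γ S T hS hT ihS ihT =>
    obtain rfl | hγ := eq_or_ne γ 0
    · rw [hS.eq_empty rfl, hT.eq_empty rfl, Set.union_self]
      exact empty 0
    · obtain ⟨β, hβ, hSβ⟩ := ihS
      obtain ⟨β', hβ', hTβ'⟩ := ihT
      exact hSβ.union hγ hβ hβ' hTβ'
  | @of_residues g γ T hg _ ih =>
    refine ⟨ω ^ g, (opow_lt_opow_iff_right one_lt_omega0).2 hg,
      rankBounded_of_initialSegments fun a ha ↦ ?_⟩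
    obtain ⟨β, hβ, hR⟩ := ih a ha
    exact ⟨β, hβ, hR.mono fun x hx ↦ ⟨hx.1, hlt _ _ hx.2⟩⟩

theorem ResiduallyThin.rankBounded (hlt : ∀ a x : M, lt x a → ¬ a ≤ x) (hT : ResiduallyThin γ T) :
    RankBounded lt T (ω ^ γ) := by
  refine rankBounded_of_initialSegments fun a ha ↦ ?_
  obtain ⟨β, hβ, hR⟩ := (hT a ha).exists_rankBounded hlt
  exact ⟨β, hβ, hR.mono fun x hx ↦ ⟨hx.1, hlt _ _ hx.2⟩⟩

end Rank

/-! ### Monoids generated by distances -/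

section Distances

open Ordinal
open scoped Pointwise

variable {ι : Type*} {M : Type u} [Monoid M]

section WordValue

variable (d : ι → ι → M)

/-- The product of the elements `d i j` over the letters `(i, j)` of a word. -/
def wordValue (w : List (ι × ι)) : M :=
  (w.map fun p ↦ d p.1 p.2).prod

/-- The equivalence relation generated by the letters of a word. -/
def linkage (w : List (ι × ι)) : Setoid ι :=
  Relation.EqvGen.setoid fun i j ↦ (i, j) ∈ w

/-- The submonoid of values of words whose letters belong to `R`, as a set. -/
def linkedValues (R : Setoid ι) : Set M :=
  wordValue d '' {w | linkage w ≤ R}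

theorem wordValue_append (u v : List (ι × ι)) :
    wordValue d (u ++ v) = wordValue d u * wordValue d v := by
  simp [wordValue]

theorem wordValue_singleton (p : ι × ι) : wordValue d [p] = d p.1 p.2 := by
  simp [wordValue]

theorem linkage_le_iff {w : List (ι × ι)} {R : Setoid ι} : linkage w ≤ R ↔ ∀ p ∈ w, R p.1 p.2 :=
  ⟨fun h _ hp ↦ h (Relation.EqvGen.rel _ _ hp), fun h ↦ Setoid.eqvGen_le fun _ _ ↦ h _⟩

end WordValue

section Domination

variable [Preorder M]

/-- A symmetric function vanishing on the diagonal (multiplicatively) with values in a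
noncommutative ordered monoid, for which the triangle inequality holds with the factors on the
right in one of the two possible orders. -/
structure IsMulPseudometric (d : ι → ι → M) : Prop where
  one_le (i j : ι) : 1 ≤ d i j
  self (i : ι) : d i i = 1
  comm (i j : ι) : d i j = d j i
  triangle (i j k : ι) : d i k ≤ d i j * d j k ∨ d i k ≤ d j k * d i j

variable {d : ι → ι → M}

theorem IsMulPseudometric.eq_one_of_mem_linkedValues_bot (hd : IsMulPseudometric d) {x : M}
    (hx : x ∈ linkedValues d ⊥) : x = 1 := by
  obtain ⟨w, hw, rfl⟩ := hx
  refine List.prod_eq_one ?_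
  rintro _ hx
  obtain ⟨p, hp, rfl⟩ := List.mem_map.1 hx
  have hp' : p.1 = p.2 := linkage_le_iff.1 hw p hp
  rw [hp', hd.self]

variable [MulLeftMono M] [MulRightMono M]

theorem IsMulPseudometric.wordValue_mono (hd : IsMulPseudometric d) {u v : List (ι × ι)}
    (huv : u.Sublist v) : wordValue d u ≤ wordValue d v :=
  (huv.map _).prod_le_prod' (by simpa using fun _ i j _ hij ↦ hij ▸ hd.one_le i j)

theorem IsMulPseudometric.one_le_wordValue (hd : IsMulPseudometric d) (w : List (ι × ι)) :
    1 ≤ wordValue d w :=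
  hd.wordValue_mono w.nil_sublist

theorem IsMulPseudometric.triangle_mul_self (hd : IsMulPseudometric d) (i j k : ι) :
    d i k ≤ (d i j * d j k) * (d i j * d j k) := by
  have hij := hd.one_le i j
  have hjk := hd.one_le j k
  rcases hd.triangle i j k with h | h
  · exact h.trans (le_mul_of_one_le_right' (one_le_mul hij hjk))
  · refine h.trans ?_
    rw [mul_assoc, ← mul_assoc (d j k)]
    exact (le_mul_of_one_le_right' hjk).trans (le_mul_of_one_le_left' hij)

theorem IsMulPseudometric.exists_le_wordValue_of_eqvGen (hd : IsMulPseudometric d)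
    {F : Set (ι × ι)} {i j : ι} (hij : Relation.EqvGen (fun i j ↦ (i, j) ∈ F) i j) :
    ∃ t, ∀ L : List (List (ι × ι)), t ≤ L.length → (∀ w ∈ L, ∀ p ∈ F, p ∈ w) →
      d i j ≤ wordValue d L.flatten := by
  induction hij with
  | rel i j hij =>
    refine ⟨1, fun L hL hF ↦ ?_⟩
    obtain ⟨w, hw⟩ := List.exists_mem_of_length_pos hL
    have hmem : (i, j) ∈ L.flatten := List.mem_flatten_of_mem hw (hF w hw _ hij)
    exact (wordValue_singleton d (i, j)).ge.trans
      (hd.wordValue_mono (List.singleton_sublist.2 hmem))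
  | refl i => exact ⟨0, fun L _ _ ↦ (hd.self i).trans_le (hd.one_le_wordValue _)⟩
  | symm i j _ ih =>
    obtain ⟨t, ht⟩ := ih
    exact ⟨t, fun L hL hF ↦ (hd.comm j i).trans_le (ht L hL hF)⟩
  | trans i j k _ _ ihij ihjk =>
    obtain ⟨t, ht⟩ := ihij
    obtain ⟨t', ht'⟩ := ihjk
    have mul_le (L : List (List (ι × ι))) (hL : t + t' ≤ L.length)
        (hF : ∀ w ∈ L, ∀ p ∈ F, p ∈ w) : d i j * d j k ≤ wordValue d L.flatten := by
      rw [← L.take_append_drop t, List.flatten_append, wordValue_append]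
      refine mul_le_mul' (ht _ ?_ fun w hw ↦ hF w (List.mem_of_mem_take hw))
        (ht' _ ?_ fun w hw ↦ hF w (List.mem_of_mem_drop hw)) <;> grind
    refine ⟨(t + t') + (t + t'), fun L hL hF ↦ (hd.triangle_mul_self i j k).trans ?_⟩
    rw [← L.take_append_drop (t + t'), List.flatten_append, wordValue_append]
    refine mul_le_mul' (mul_le _ ?_ fun w hw ↦ hF w (List.mem_of_mem_take hw))
      (mul_le _ ?_ fun w hw ↦ hF w (List.mem_of_mem_drop hw)) <;> grind

end Domination

theorem exists_sublist_forall_eq_of_le_length {α β : Type*} [Finite β] (f : α → β) (t : ℕ) :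
    ∃ c, ∀ L : List α, c ≤ L.length →
      ∃ b, ∃ s : List α, s.Sublist L ∧ t ≤ s.length ∧ ∀ a ∈ s, f a = b := by
  classical
  cases nonempty_fintype β
  refine ⟨Fintype.card β * t + 1, fun L hL ↦ ?_⟩
  have hsum : ∑ b, L.countP (f · == b) = L.length := by
    simpa [List.count, List.countP_map, Function.comp_def] using
      Multiset.sum_count_eq_card (s := Finset.univ) (m := (L.map f : Multiset β))
  obtain ⟨b, -, hb⟩ : ∃ b ∈ Finset.univ, t < L.countP (f · == b) := by
    refine Finset.exists_lt_of_sum_lt ?_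
    simp only [Finset.sum_const, Finset.card_univ, _root_.smul_eq_mul, hsum]
    omega
  exact ⟨b, L.filter (f · == b), List.filter_sublist, hb.le.trans_eq List.countP_eq_length_filter,
    by simp⟩

section Blocks

variable (R : Setoid ι)

/-- The word starts with `m` consecutive blocks each of which generates `R`. -/
def HasBlocks (m : ℕ) (w : List (ι × ι)) : Prop :=
  ∃ (L : List (List (ι × ι))) (v : List (ι × ι)),
    L.length = m ∧ (∀ u ∈ L, linkage u = R) ∧ w = L.flatten ++ v

variable {R}

theorem exists_minimal_prefix {α : Type*} {P : List α → Prop} (hnil : ¬ P []) {w : List α}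
    (hw : P w) : ∃ u p v, w = u ++ p :: v ∧ ¬ P u ∧ P (u ++ [p]) := by
  induction w using List.reverseRecOn with
  | nil => exact absurd hw hnil
  | append_singleton w p ih =>
    by_cases hPw : P w
    · obtain ⟨u, q, v, rfl, hu, huq⟩ := ih hPw
      exact ⟨u, q, v ++ [p], by simp, hu, huq⟩
    · exact ⟨w, p, [], rfl, hPw, hw⟩

theorem linkage_lt_or_exists_of_not_hasBlocks_succ (hR : R ≠ ⊥) {m : ℕ} {w : List (ι × ι)}
    (hwR : linkage w ≤ R) (hw : ¬ HasBlocks R (m + 1) w) :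
    linkage w < R ∨ ∃ u p v, w = u ++ p :: v ∧ linkage u < R ∧
      linkage v ≤ R ∧ ¬ HasBlocks R m v := by
  refine hwR.lt_or_eq.imp_right fun hwR' ↦ ?_
  have hnil : linkage ([] : List (ι × ι)) ≠ R := fun h ↦
    hR (le_bot_iff.1 (h ▸ linkage_le_iff.2 (by simp)))
  obtain ⟨u, p, v, rfl, hu, hup⟩ := exists_minimal_prefix (P := (linkage · = R)) hnil hwR'
  rw [linkage_le_iff] at hwR
  refine ⟨u, p, v, rfl, lt_of_le_of_ne ?_ hu, ?_, ?_⟩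
  · exact linkage_le_iff.2 fun q hq ↦ hwR q (by simp [hq])
  · exact linkage_le_iff.2 fun q hq ↦ hwR q (by simp [hq])
  · rintro ⟨L, v, rfl, hL, rfl⟩
    exact hw ⟨(u ++ [p]) :: L, v, rfl, by simpa [hup] using hL, by simp⟩

theorem card_quotient_lt_card_quotient [Finite ι] {R' : Setoid ι} (h : R' < R) :
    Nat.card (Quotient R) < Nat.card (Quotient R') := by
  let f : Quotient R' → Quotient R := Quotient.map' id h.le
  have hf : Function.Surjective f := fun x ↦
    Quotient.inductionOn x fun a ↦ ⟨Quotient.mk R' a, rfl⟩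
  by_contra! hle
  have hinj := (hf.bijective_of_nat_card_le hle).injective
  exact h.not_ge fun a b hab ↦ Quotient.exact (hinj (Quotient.sound hab))

end Blocks

section ThinValues

variable [Finite ι] [Preorder M] [MulLeftMono M] [MulRightMono M] {d : ι → ι → M} {R : Setoid ι}

theorem IsMulPseudometric.exists_le_wordValue_flatten (hd : IsMulPseudometric d) {i j : ι}
    (hij : R i j) : ∃ c, ∀ L : List (List (ι × ι)), c ≤ L.length → (∀ w ∈ L, linkage w = R) →
      d i j ≤ wordValue d L.flatten := by
  have exists_bound (F : Set (ι × ι)) : ∃ t, Relation.EqvGen (fun i j ↦ (i, j) ∈ F) i j →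
      ∀ L : List (List (ι × ι)), t ≤ L.length → (∀ w ∈ L, ∀ p ∈ F, p ∈ w) →
        d i j ≤ wordValue d L.flatten := by
    by_cases h : Relation.EqvGen (fun i j ↦ (i, j) ∈ F) i j
    · exact (hd.exists_le_wordValue_of_eqvGen h).imp fun t ht _ ↦ ht
    · exact ⟨0, fun h' ↦ absurd h' h⟩
  choose t ht using exists_bound
  obtain ⟨T, hT⟩ := Finite.exists_le t
  obtain ⟨c, hc⟩ := exists_sublist_forall_eq_of_le_length
    (fun w : List (ι × ι) ↦ {p | p ∈ w}) (T + 1)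
  refine ⟨c, fun L hL hLR ↦ ?_⟩
  obtain ⟨F, s, hsL, hTs, hsF⟩ := hc L hL
  refine (ht F ?_ s ((hT F).trans (Nat.le_of_succ_le hTs)) fun w hw p hp ↦ ?_).trans
    (hd.wordValue_mono hsL.flatten)
  · obtain ⟨w, hw⟩ := List.exists_mem_of_length_pos (Nat.zero_lt_of_lt hTs)
    rw [← hLR w (hsL.subset hw)] at hij
    rwa [← hsF w hw]
  · rwa [← hsF w hw] at hp

theorem IsMulPseudometric.exists_wordValue_le (hd : IsMulPseudometric d) {w : List (ι × ι)}
    (hw : linkage w ≤ R) :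
    ∃ m, ∀ u, HasBlocks R m u → wordValue d w ≤ wordValue d u := by
  suffices ∃ c, ∀ L : List (List (ι × ι)), c ≤ L.length → (∀ u ∈ L, linkage u = R) →
      wordValue d w ≤ wordValue d L.flatten by
    obtain ⟨c, hc⟩ := this
    refine ⟨c, ?_⟩
    rintro _ ⟨L, v, hL, hLR, rfl⟩
    exact (hc L hL.ge hLR).trans (hd.wordValue_mono (List.sublist_append_left _ _))
  rw [linkage_le_iff] at hw
  induction w with
  | nil => exact ⟨0, fun L _ _ ↦ hd.one_le_wordValue _⟩
  | cons p w ih =>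
    obtain ⟨c, hc⟩ := hd.exists_le_wordValue_flatten (hw p List.mem_cons_self)
    obtain ⟨c', hc'⟩ := ih fun q hq ↦ hw q (List.mem_cons_of_mem _ hq)
    refine ⟨c + c', fun L hL hLR ↦ ?_⟩
    rw [← List.singleton_append, wordValue_append, wordValue_singleton, ← L.take_append_drop c,
      List.flatten_append, wordValue_append]
    refine mul_le_mul' (hc _ ?_ fun u hu ↦ hLR u (List.mem_of_mem_take hu))
      (hc' _ ?_ fun u hu ↦ hLR u (List.mem_of_mem_drop hu)) <;> grind

theorem thin_image_wordValue_not_hasBlocks {γ : Ordinal.{u}} (hR : R ≠ ⊥)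
    (hlt : Thin (ω ^ γ) (wordValue d '' {w | linkage w < R})) (m : ℕ) :
    Thin (ω ^ γ) (wordValue d '' {w | linkage w ≤ R ∧ ¬ HasBlocks R m w}) := by
  induction m with
  | zero =>
    refine .mono (.empty _) ?_
    rintro _ ⟨w, ⟨-, hw⟩, rfl⟩
    exact hw ⟨[], w, rfl, by simp, rfl⟩
  | succ m ih =>
    have letters : Thin (ω ^ γ) (⋃ p ∈ (Set.univ : Set (ι × ι)), {d p.1 p.2}) :=
      Thin.biUnion Set.finite_univ fun p _ ↦ Thin.of_forall_le (opow_pos _ omega0_pos) <| by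
        rintro _ rfl _ rfl
        exact le_rfl
    refine .mono (.union hlt (hlt.mul (letters.mul ih))) ?_
    rintro _ ⟨w, ⟨hwR, hw⟩, rfl⟩
    obtain hw | ⟨u, p, v, rfl, hu, hvR, hv⟩ :=
      linkage_lt_or_exists_of_not_hasBlocks_succ hR hwR hw
    · exact .inl ⟨w, hw, rfl⟩
    · rw [← List.singleton_append, wordValue_append, wordValue_append, wordValue_singleton]
      exact .inr (Set.mul_mem_mul ⟨u, hu, rfl⟩ (Set.mul_mem_mul
        (Set.mem_biUnion (Set.mem_univ p) rfl) ⟨v, ⟨hvR, hv⟩, rfl⟩))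

theorem IsMulPseudometric.residuallyThin_linkedValues (hd : IsMulPseudometric d) (hR : R ≠ ⊥) :
    ResiduallyThin (ω ^ ((Nat.card ι - Nat.card (Quotient R) - 1 : ℕ) : Ordinal.{u}))
      (linkedValues d R) := by
  have : Finite (Setoid ι) :=
    Finite.of_injective (fun R : Setoid ι ↦ (R : ι → ι → Prop)) fun _ _ h ↦
      Setoid.ext fun i j ↦ iff_of_eq (congrFun₂ h i j)
  induction R using WellFoundedLT.induction with | _ R ih
  have hlt : Thin (ω ^ ((Nat.card ι - Nat.card (Quotient R) - 1 : ℕ) : Ordinal.{u}))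
      (wordValue d '' {w | linkage w < R}) := by
    refine .mono (Thin.biUnion (Set.toFinite {R' | R' < R}) (T := linkedValues d) fun R' hR' ↦ ?_)
      ?_
    · obtain rfl | hR'0 := eq_or_ne R' ⊥
      · refine Thin.of_forall_le (opow_pos _ omega0_pos) fun a ha x hx ↦ ?_
        rw [hd.eq_one_of_mem_linkedValues_bot ha, hd.eq_one_of_mem_linkedValues_bot hx]
      · refine .of_residues ((opow_lt_opow_iff_right one_lt_omega0).2 ?_) (ih R' hR' hR'0)
        have h₁ := card_quotient_lt_card_quotient hR'
        have h₂ := card_quotient_lt_card_quotient (bot_lt_iff_ne_bot.2 hR'0)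
        have h₃ := Nat.card_le_card_of_surjective _ (Quotient.mk_surjective (s := (⊥ : Setoid ι)))
        exact_mod_cast (by omega)
    · rintro _ ⟨w, hw, rfl⟩
      exact Set.mem_biUnion hw ⟨w, le_refl (linkage w), rfl⟩
  rintro _ ⟨w, hw, rfl⟩
  obtain ⟨m, hm⟩ := hd.exists_wordValue_le hw
  refine .mono (thin_image_wordValue_not_hasBlocks hR hlt m) ?_
  rintro _ ⟨⟨u, hu, rfl⟩, hwu⟩
  exact ⟨u, ⟨hu, fun hmu ↦ hwu (hm u hmu)⟩, rfl⟩

end ThinValues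

end Distances

/-! ### The dual braid monoid -/

section Dual

open Ordinal

theorem isMulPseudometric_symmBand (n : ℕ) : IsMulPseudometric (symmBand n) where
  one_le := one_le_symmBand
  self := symmBand_self
  comm := symmBand_comm
  triangle := symmBand_triangle

theorem dualMonoid_subset_linkedValues (n : ℕ) :
    (dualMonoid n : Set (Braid n)) ⊆ linkedValues (symmBand n) ⊤ := fun g hg ↦ by
  induction hg using Submonoid.closure_induction with
  | mem g hg =>
    obtain ⟨i, j, hi, hij, hj, rfl⟩ := hg
    refine ⟨[(⟨i, hi, by omega⟩, ⟨j, by omega, hj⟩)], le_top (a := linkage _), ?_⟩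
    rw [wordValue_singleton]
    exact symmBand_of_lt hij
  | one => exact ⟨[], le_top (a := linkage _), rfl⟩
  | mul g h _ _ hg hh =>
    obtain ⟨u, -, rfl⟩ := hg
    obtain ⟨v, -, rfl⟩ := hh
    exact ⟨u ++ v, le_top (a := linkage _), wordValue_append _ u v⟩

theorem rankBounded_dualMonoid (n : ℕ) :
    RankBounded (dehornoyLt (n + 2)) (dualMonoid (n + 2)) (ω ^ ω ^ (n : Ordinal.{0})) := by
  let one : Set.Icc 1 (n + 2) := ⟨1, by simp⟩
  let two : Set.Icc 1 (n + 2) := ⟨2, by simp⟩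
  have htop : (⊤ : Setoid (Set.Icc 1 (n + 2))) ≠ ⊥ := fun h ↦ by
    have hone : one = two := (h ▸ trivial : (⊥ : Setoid (Set.Icc 1 (n + 2))) one two)
    exact OfNat.one_ne_ofNat 2 (congrArg Subtype.val hone)
  have hcard : Nat.card (Quotient (⊤ : Setoid (Set.Icc 1 (n + 2)))) = 1 :=
    Nat.card_eq_one_iff_unique.2
      ⟨⟨fun x y ↦ Quotient.inductionOn₂ x y fun _ _ ↦ Quotient.sound trivial⟩, ⟨⟦one⟧⟩⟩
  have hthin := (isMulPseudometric_symmBand (n + 2)).residuallyThin_linkedValues htop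
  rw [hcard, Nat.card_coe_set_eq, Set.ncard_Icc_nat] at hthin
  exact (hthin.rankBounded fun a x ↦ not_le_of_dehornoyLt).mono (dualMonoid_subset_linkedValues _)

theorem posMonoid_le_dualMonoid (n : ℕ) : posMonoid n ≤ dualMonoid n := by
  rw [posMonoid, Submonoid.closure_le]
  rintro _ ⟨i, hi, hin, rfl⟩
  exact Submonoid.subset_closure
    ⟨i, i + 1, hi, i.lt_succ_self, by omega, (band_self_succ n i).symm⟩

end Dual

/-! ### Shifting braids -/

section Shift

open ArtinBraidMonoid

variable {n i : ℕ} {g : Braid n}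

theorem genσ_mem_posMonoid (n i : ℕ) : genσ n i ∈ posMonoid n := by
  by_cases hi : i ∈ Set.Ico 1 n
  · exact Submonoid.subset_closure ⟨i, hi.1, Nat.le_sub_one_of_lt hi.2, rfl⟩
  · exact genσ_of_notMem hi ▸ one_mem _

theorem toBraid_mem_posMonoid (x : ArtinBraidMonoid n) : toBraid n x ∈ posMonoid n := by
  induction x using ArtinMonoid.induction_on with
  | one => exact one_mem _
  | gen_mul i x ih =>
    rw [map_mul, ← σ_val, toBraid_σ]
    exact mul_mem (genσ_mem_posMonoid n i) ih

theorem genσ_inv_mul_fullTwist_mem_posMonoid (hi : 1 ≤ i) (hin : i < n) :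
    (genσ n i)⁻¹ * fullTwist n (genσ n) ∈ posMonoid n := by
  obtain ⟨x, hx⟩ := (braidRelations_σ n).dvd_fullTwist hi hin
  rw [← toBraid_fullTwist, hx, map_mul, toBraid_σ, inv_mul_cancel_left]
  exact toBraid_mem_posMonoid x

theorem lift_genσ_succ_eq_one : ∀ r ∈ braidRels n,
    FreeGroup.lift (fun i ↦ if i = 0 then 1 else genσ (n + 1) (i + 1)) r = 1 := by
  rintro r (⟨i, j, hi, hij, hj, rfl⟩ | ⟨i, hi, hin, rfl⟩ | ⟨i, hi, rfl⟩) <;>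
    simp only [map_mul, map_inv, FreeGroup.lift_apply_of]
  · rw [if_neg (by omega), if_neg (by omega), mul_inv_eq_one, mul_inv_eq_iff_eq_mul]
    exact genσ_comm (by omega) (by omega) (by omega)
  · rw [if_neg (by omega), if_neg (by omega), mul_inv_eq_one]
    exact genσ_braid (by omega) (by omega)
  · split_ifs
    · rfl
    · exact genσ_of_notMem (by rw [Set.mem_Ico]; omega)

/-- The homomorphism `B_n → B_{n+1}` sending `σ_i` to `σ_{i+1}`, which adds a strand on the left. -/
def shift (n : ℕ) : Braid n →* Braid (n + 1) := PresentedGroup.toGroup lift_genσ_succ_eq_one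

theorem shift_genσ (hi : 1 ≤ i) : shift n (genσ n i) = genσ (n + 1) (i + 1) :=
  (PresentedGroup.toGroup.of lift_genσ_succ_eq_one).trans (if_neg (by omega))

theorem shift_mem_posMonoid (hg : g ∈ posMonoid n) : shift n g ∈ posMonoid (n + 1) := by
  induction hg using Submonoid.closure_induction with
  | mem _ h =>
    obtain ⟨i, hi, -, rfl⟩ := h
    rw [shift_genσ hi]
    exact genσ_mem_posMonoid _ _
  | one => exact map_one (shift n) ▸ one_mem _
  | mul a b _ _ ha hb => exact map_mul (shift n) a b ▸ mul_mem ha hb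

theorem shift_mem_sigmaNonneg (hi : 1 ≤ i) (hg : g ∈ sigmaNonneg n i) :
    shift n g ∈ sigmaNonneg (n + 1) (i + 1) := by
  induction hg using Submonoid.closure_induction with
  | mem _ h =>
    obtain ⟨j, hj, rfl⟩ | ⟨j, hj, rfl⟩ := h
    · rw [shift_genσ (by omega)]
      exact genσ_mem_sigmaNonneg (by omega)
    · rw [map_inv, shift_genσ (by omega)]
      exact genσ_inv_mem_sigmaNonneg (by omega)
  | one => exact map_one (shift n) ▸ one_mem _
  | mul a b _ _ ha hb => exact map_mul (shift n) a b ▸ mul_mem ha hb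

theorem SigmaPositive.shift (hg : SigmaPositive n i g) :
    SigmaPositive (n + 1) (i + 1) (shift n g) := by
  obtain ⟨hi, hin, a, ha, b, hb, rfl⟩ := sigmaPositive_iff.1 hg
  refine sigmaPositive_iff.2 ⟨by omega, by omega, _, shift_mem_sigmaNonneg hi ha, _,
    shift_mem_sigmaNonneg hi hb, ?_⟩
  rw [map_mul, map_mul, shift_genσ hi]

end Shift

/-! ### Squeezing words between shifted braids -/

section Squeeze

open ReducedWord
open scoped Pointwise

variable {n i : ℕ} {g a b : Braid n} {x y : ReducedWord}

/-- The words whose first letter is `1` or `2`; they are stable under `σ_i` for `i ≥ 2`. -/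
def wideWords : Set ReducedWord := {x | x.head = 1 ∨ x.head = 2}

/-- The words starting with `2, 1`. All braids in `σ_3, …, σ_{n-1}` stabilize this set, and `σ_2`
maps it above itself. -/
def narrowWords : Set ReducedWord := {x | x.head = 2 ∧ x.next = 1}

theorem act_mem_narrowWords (hi : 3 ≤ i) (p : Bool) (hx : x ∈ narrowWords) :
    act i p x ∈ narrowWords := by
  have hhead : (act i (!p) (push 2 x)).head = 1 := by
    have hpush : (push 2 x).head = 1 := (head_push_of_eq hx.1).trans hx.2
    obtain ⟨-, -, -, hact⟩ := head_act (by omega : 1 ≤ i) (!p) (push 2 x)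
    rw [hact] <;> rw [hpush] <;> grind [outer]
  rw [← push_push 2 x, act_push_of_ne (by omega)]
  have hne : (act i (!p) (push 2 x)).head ≠ (2 : ℕ) := by simp [hhead]
  exact ⟨head_push_of_ne hne, (next_push_of_ne hne).trans hhead⟩

theorem genσ_mem_stabilizer_narrowWords (hi : 3 ≤ i) :
    genσ n i ∈ MulAction.stabilizer (Braid n) narrowWords := by
  by_cases hin : i < n
  · refine MulAction.mem_stabilizer_set.2 fun x ↦ ⟨fun hx ↦ ?_, fun hx ↦ ?_⟩
    · rw [← inv_smul_smul (genσ n i) x, genσ_inv_smul (by omega) hin]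
      exact act_mem_narrowWords hi false hx
    · rw [genσ_smul (by omega) hin]
      exact act_mem_narrowWords hi true hx
  · rw [genσ_of_notMem (by rw [Set.mem_Ico]; omega)]
    exact one_mem _

/-- Deleting the letters `σ_2` from a word lowers the braid it represents. -/
theorem exists_le_of_mem_sigmaNonneg_two (hg : g ∈ sigmaNonneg n 2) :
    ∃ h ∈ MulAction.stabilizer (Braid n) narrowWords, h ≤ g := by
  induction hg using Submonoid.closure_induction with
  | mem _ h =>
    obtain ⟨j, hj, rfl⟩ | ⟨j, hj, rfl⟩ := h
    · obtain rfl | hj := hj.eq_or_lt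
      · exact ⟨1, one_mem _, Braid.le_def.2 fun x ↦ (one_smul _ x).trans_le (le_genσ_smul 2 x)⟩
      · exact ⟨_, genσ_mem_stabilizer_narrowWords hj, le_rfl⟩
    · exact ⟨_, inv_mem (genσ_mem_stabilizer_narrowWords hj), le_rfl⟩
  | one => exact ⟨1, one_mem _, le_rfl⟩
  | mul a b _ _ ha hb =>
    obtain ⟨h, hh, hha⟩ := ha
    obtain ⟨k, hk, hkb⟩ := hb
    exact ⟨h * k, mul_mem hh hk, mul_le_mul' hha hkb⟩

theorem SigmaPositive.lt_smul_of_mem_narrowWords (hg : SigmaPositive n 2 g)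
    (hx : x ∈ narrowWords) (hy : y ∈ narrowWords) : y < g • x := by
  obtain ⟨-, hn, a, ha, b, hb, rfl⟩ := sigmaPositive_iff.1 hg
  obtain ⟨h, hh, hha⟩ := exists_le_of_mem_sigmaNonneg_two ha
  obtain ⟨k, hk, hkb⟩ := exists_le_of_mem_sigmaNonneg_two hb
  have hkx : k • x ∈ narrowWords := (MulAction.mem_stabilizer_set.1 hk x).2 hx
  have hhy : h⁻¹ • y ∈ narrowWords := (MulAction.mem_stabilizer_set.1 (inv_mem hh) y).2 hy
  have hhead : (genσ n 2 • k • x).head = 1 := by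
    rw [genσ_smul (by omega) hn]
    exact ((head_act (by omega : 1 ≤ 2) true (k • x)).1 hkx.1).1
  have hlt : h⁻¹ • y < genσ n 2 • k • x :=
    lt_of_head_lt (by rw [hhead, hhy.1]; exact one_lt_two)
  calc y = h • h⁻¹ • y := (smul_inv_smul h y).symm
    _ < h • genσ n 2 • k • x := (smul_lt_smul_iff h).2 hlt
    _ = (h * genσ n 2 * k) • x := by rw [mul_smul, mul_smul]
    _ ≤ (a * genσ n 2 * b) • x := mul_le_mul' (mul_le_mul_left hha _) hkb x

theorem genσ_smul_mem_wideWords (hi : 2 ≤ i) (hx : x ∈ wideWords) :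
    genσ n i • x ∈ wideWords := by
  by_cases hin : i < n
  · rw [genσ_smul (by omega) hin]
    have h := head_act (by omega : 1 ≤ i) true x
    simp only [wideWords, Set.mem_ofPred_eq, outer] at hx ⊢ h
    grind
  · rwa [genσ_of_notMem (by rw [Set.mem_Ico]; omega), one_smul]

theorem shift_smul_mem_wideWords (hg : g ∈ posMonoid n) (hx : x ∈ wideWords) :
    shift n g • x ∈ wideWords := by
  induction hg using Submonoid.closure_induction generalizing x with
  | mem _ h =>
    obtain ⟨i, hi, -, rfl⟩ := h
    rw [shift_genσ hi]
    exact genσ_smul_mem_wideWords (by omega) hx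
  | one => rwa [map_one, one_smul]
  | mul a b _ _ ha hb => rw [map_mul, mul_smul]; exact ha (hb hx)

/-- The braid `σ_1⁻¹ σ_2 σ_1⁻¹`, which maps `wideWords` into `narrowWords` and becomes positive
when multiplied by the square of the full twist. -/
def squeeze (n : ℕ) : Braid n := (genσ n 1)⁻¹ * genσ n 2 * (genσ n 1)⁻¹

theorem squeeze_smul_mem_narrowWords (hn : 3 ≤ n) (hx : x ∈ wideWords) :
    squeeze n • x ∈ narrowWords := by
  rw [squeeze, mul_smul, mul_smul, genσ_inv_smul le_rfl (by omega), genσ_inv_smul le_rfl (by omega),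
    genσ_smul (by omega) (by omega)]
  have h₁ := head_act le_rfl false x
  have h₂ := head_act one_le_two true (act 1 false x)
  have h₃ := head_act le_rfl false (act 2 true (act 1 false x))
  simp only [wideWords, narrowWords, Set.mem_ofPred_eq, outer] at hx ⊢ h₁ h₂ h₃
  grind

theorem fullTwist_sq_mul_squeeze_mem_posMonoid (hn : 3 ≤ n) :
    fullTwist n (genσ n) ^ 2 * squeeze n ∈ posMonoid n := by
  have h := genσ_inv_mul_fullTwist_mem_posMonoid le_rfl (by omega : 1 < n)
  have heq : fullTwist n (genσ n) ^ 2 * squeeze n = (genσ n 1)⁻¹ * fullTwist n (genσ n) *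
      genσ n 2 * ((genσ n 1)⁻¹ * fullTwist n (genσ n)) := by
    rw [squeeze, sq, mul_assoc, (Braid.commute_fullTwist (_ * _)).eq]
    simp only [mul_assoc]
    rw [(Braid.commute_fullTwist _).left_comm]
  rw [heq]
  exact mul_mem (mul_mem h (genσ_mem_posMonoid n 2)) h

theorem sigmaPositive_one_of_smul_single_lt (h : a • single 1 < b • single 1) :
    SigmaPositive n 1 (a⁻¹ * b) := by
  have hlt : single 1 < (a⁻¹ * b) • single 1 := by
    rwa [mul_smul, ← smul_lt_smul_iff a, smul_inv_smul]
  have eq_one {i : ℕ} {g : Braid n} (hg : SigmaPositive n i g)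
      (hne : g • single 1 ≠ single 1) : i = 1 := by
    by_contra hi
    have := (sigmaPositive_iff.1 hg).1
    exact hne (sigmaNonneg_smul_single hg.mem_sigmaNonneg (by omega))
  obtain h | ⟨i, h | h⟩ := eq_one_or_sigmaPositive_or_sigmaPositive_inv (a⁻¹ * b)
  · exact absurd hlt (by rw [h, one_smul]; exact lt_irrefl _)
  · exact eq_one h hlt.ne' ▸ h
  · have hne : (a⁻¹ * b)⁻¹ • single 1 ≠ single 1 := fun e ↦ hlt.ne (inv_smul_eq_iff.1 e)
    obtain rfl := eq_one h hne
    have := (smul_lt_smul_iff (a⁻¹ * b)).2 h.single_lt_smul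
    exact absurd hlt (by rw [smul_inv_smul] at this; exact this.asymm)

end Squeeze

/-! ### The lower bound -/

section LowerBound

open Ordinal ReducedWord

variable {n : ℕ}

/-- The orbit of the word `1` under the positive braids. Comparing two points of the orbit detects
`σ_1`-positivity of the corresponding quotient of braids. -/
def posOrbit (n : ℕ) : Set ReducedWord := (· • single 1) '' (posMonoid n : Set (Braid n))

theorem single_one_mem_posOrbit (n : ℕ) : single 1 ∈ posOrbit n := ⟨1, one_mem _, one_smul _ _⟩

theorem smul_mem_posOrbit {g : Braid n} {x : ReducedWord} (hg : g ∈ posMonoid n)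
    (hx : x ∈ posOrbit n) : g • x ∈ posOrbit n := by
  obtain ⟨h, hh, rfl⟩ := hx
  exact ⟨g * h, mul_mem hg hh, mul_smul g h _⟩

theorem exists_posMonoid_representatives (n : ℕ) : ∃ rep : posOrbit n → posMonoid n,
    ∀ y z, y < z → SigmaPositive n 1 ((rep y : Braid n)⁻¹ * rep z) := by
  have h (y : posOrbit n) : ∃ g : posMonoid n, (g : Braid n) • single 1 = y :=
    let ⟨g, hg, hgy⟩ := y.2
    ⟨⟨g, hg⟩, hgy⟩
  choose rep hrep using h
  exact ⟨rep, fun y z hyz ↦ sigmaPositive_one_of_smul_single_lt (by rwa [hrep, hrep])⟩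

theorem rankBounded_posMonoid (n : ℕ) :
    RankBounded (dehornoyLt (n + 2)) (posMonoid (n + 2)) (ω ^ ω ^ (n : Ordinal.{0})) :=
  (rankBounded_dualMonoid n).mono (posMonoid_le_dualMonoid _)

theorem nonempty_posOrbit_relEmbedding_posMonoid (n : ℕ) : Nonempty
    (((· < ·) : posOrbit n → posOrbit n → Prop) ↪r Subrel (dehornoyLt n) (· ∈ posMonoid n)) := by
  obtain ⟨rep, hrep⟩ := exists_posMonoid_representatives n
  exact ⟨RelEmbedding.ofMonotone rep fun y z hyz ↦ dehornoyLt_of_sigmaPositive (hrep y z hyz)⟩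

instance (n : ℕ) : WellFoundedLT (posOrbit (n + 2)) :=
  have := (rankBounded_posMonoid n).isWellOrder
  let ⟨f⟩ := nonempty_posOrbit_relEmbedding_posMonoid (n + 2)
  f.isWellFounded

/-- The wide words that a power of the squared full twist moves into the positive orbit. -/
def wideOrbit (n p : ℕ) : Set ReducedWord :=
  {x ∈ wideWords | (fullTwist n (genσ n) ^ 2) ^ p • x ∈ posOrbit n}

theorem nonempty_wideOrbit_orderEmbedding_posOrbit (n p : ℕ) :
    Nonempty (wideOrbit n p ↪o posOrbit n) :=
  ⟨OrderEmbedding.ofStrictMono (fun x ↦ ⟨_, x.2.2⟩) fun _ _ h ↦ (smul_lt_smul_iff _).2 h⟩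

instance (n p : ℕ) : WellFoundedLT (wideOrbit (n + 2) p) :=
  let ⟨f⟩ := nonempty_wideOrbit_orderEmbedding_posOrbit (n + 2) p
  f.wellFoundedLT

theorem shift_smul_squeeze_smul_mem_wideOrbit {p : ℕ} {g : Braid n} {x : ReducedWord}
    (hn : 2 ≤ n) (hg : g ∈ posMonoid n) (hx : x ∈ wideOrbit (n + 1) p) :
    shift n g • squeeze (n + 1) • x ∈ wideOrbit (n + 1) (p + 1) := by
  refine ⟨shift_smul_mem_wideWords hg (.inr (squeeze_smul_mem_narrowWords (by omega) hx.1).1), ?_⟩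
  have hmem := smul_mem_posOrbit (mul_mem (shift_mem_posMonoid hg)
    (fullTwist_sq_mul_squeeze_mem_posMonoid (by omega : 3 ≤ n + 1))) hx.2
  have hcomm (k : Braid (n + 1)) : Commute (fullTwist (n + 1) (genσ (n + 1)) ^ 2) k :=
    (Braid.commute_fullTwist k).pow_left 2
  rwa [← mul_smul, ← ((hcomm _).pow_left p).eq, ← (hcomm _).left_comm, ← mul_assoc, ← pow_succ,
    mul_smul, mul_smul] at hmem

theorem typeLT_wideOrbit_mul_typeLT_posOrbit_le (n p : ℕ) :
    (typeLT (wideOrbit (n + 3) p)) * (typeLT (posOrbit (n + 2))) ≤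
      typeLT (wideOrbit (n + 3) (p + 1)) := by
  obtain ⟨rep, hrep⟩ := exists_posMonoid_representatives (n + 2)
  rw [← type_prod_lex]
  let F (yx : posOrbit (n + 2) × wideOrbit (n + 3) p) : wideOrbit (n + 3) (p + 1) :=
    ⟨_, shift_smul_squeeze_smul_mem_wideOrbit (by omega) (rep yx.1).2 yx.2.2⟩
  refine (RelEmbedding.ofMonotone F fun yx yx' h ↦ ?_).ordinal_type_le
  obtain @⟨y, x, z, w, hyz⟩ | ⟨y, hxw⟩ := h
  · have hnarrow (v : wideOrbit (n + 3) p) : squeeze (n + 3) • v.1 ∈ narrowWords :=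
      squeeze_smul_mem_narrowWords (by omega) v.2.1
    have hlt := (hrep y z hyz).shift.lt_smul_of_mem_narrowWords (hnarrow w) (hnarrow x)
    rwa [← smul_lt_smul_iff (shift (n + 2) (rep y)), map_mul, map_inv, mul_smul,
      smul_inv_smul] at hlt
  · exact (smul_lt_smul_iff _).2 ((smul_lt_smul_iff _).2 hxw)

theorem typeLT_posOrbit_pow_le (n p : ℕ) :
    (typeLT (posOrbit (n + 2))) ^ p ≤ typeLT (wideOrbit (n + 3) p) := by
  induction p with
  | zero =>
    have hone : single 1 ∈ wideOrbit (n + 3) 0 :=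
      ⟨.inl (head_single 1), by rw [pow_zero, one_smul]; exact single_one_mem_posOrbit _⟩
    have : Nonempty (wideOrbit (n + 3) 0) := ⟨⟨_, hone⟩⟩
    exact (pow_zero _).trans_le (Order.one_le_iff_ne_zero.2 (type_ne_zero_of_nonempty _))
  | succ p ih =>
    rw [pow_succ]
    exact (mul_le_mul_left ih _).trans (typeLT_wideOrbit_mul_typeLT_posOrbit_le n p)

theorem omega0_le_typeLT_posOrbit (n : ℕ) : ω ≤ typeLT (posOrbit (n + 2)) := by
  let F (k : ℕ) : posOrbit (n + 2) :=
    ⟨genσ (n + 2) 1 ^ k • single 1, _, pow_mem (genσ_mem_posMonoid _ _) k, rfl⟩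
  have hF : StrictMono F := strictMono_nat_of_lt_succ fun k ↦ by
    change _ • _ < genσ (n + 2) 1 ^ (k + 1) • single 1
    rw [pow_succ, mul_smul, smul_lt_smul_iff]
    exact single_lt_genσ_smul le_rfl (by omega)
  exact type_nat_lt.ge.trans (OrderEmbedding.ofStrictMono F hF).ltEmbedding.ordinal_type_le

theorem omega0_opow_opow_le_typeLT_posOrbit (n : ℕ) :
    ω ^ ω ^ (n : Ordinal.{0}) ≤ typeLT (posOrbit (n + 2)) := by
  induction n with
  | zero => simpa using omega0_le_typeLT_posOrbit 0
  | succ n ih =>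
    rw [Nat.cast_succ, opow_add_one, opow_mul,
      opow_le_of_isSuccLimit (opow_pos _ omega0_pos).ne' isSuccLimit_omega0]
    intro b hb
    obtain ⟨p, rfl⟩ := lt_omega0.1 hb
    obtain ⟨f⟩ := nonempty_wideOrbit_orderEmbedding_posOrbit (n + 3) p
    calc (ω ^ ω ^ (n : Ordinal.{0})) ^ (p : Ordinal.{0})
        ≤ (typeLT (posOrbit (n + 2))) ^ p := by
          rw [← opow_natCast]; exact opow_le_opow_left _ ih
      _ ≤ typeLT (wideOrbit (n + 3) p) := typeLT_posOrbit_pow_le n p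
      _ ≤ typeLT (posOrbit (n + 3)) := f.ltEmbedding.ordinal_type_le

end LowerBound

/-- Theorem: `(B_n^{+}, <_D)` and `(B_n^{+*}, <_D)` are order-isomorphic. -/
theorem posMonoid_orderIso_dualMonoid (n : ℕ) (hn : 2 ≤ n) :
    ∃ f : posMonoid n → dualMonoid n, Function.Bijective f ∧
      ∀ α β : posMonoid n, dehornoyLt n α.1 β.1 ↔ dehornoyLt n (f α).1 (f β).1 := by
  obtain ⟨m, rfl⟩ := Nat.exists_eq_add_of_le' hn
  have := (rankBounded_posMonoid m).isWellOrder
  have := (rankBounded_dualMonoid m).isWellOrder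
  let pos := Subrel (dehornoyLt (m + 2)) (· ∈ posMonoid (m + 2))
  let dual := Subrel (dehornoyLt (m + 2)) (· ∈ dualMonoid (m + 2))
  have pos_le_dual : Ordinal.type pos ≤ Ordinal.type dual :=
    (Subrel.inclusionEmbedding _ (posMonoid_le_dualMonoid _)).ordinal_type_le
  obtain ⟨f⟩ := nonempty_posOrbit_relEmbedding_posMonoid (m + 2)
  have dual_le_pos : Ordinal.type dual ≤ Ordinal.type pos :=
    (rankBounded_dualMonoid m).type_le.trans <|
      (omega0_opow_opow_le_typeLT_posOrbit m).trans f.ordinal_type_le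
  obtain ⟨e⟩ := Ordinal.type_eq.1 (pos_le_dual.antisymm dual_le_pos)
  exact ⟨e, e.bijective, fun α β ↦ e.map_rel_iff.symm⟩
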